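/- arXiv:math/0510184 — 6 statements merged into one kernel-verified Lean document; each statement's English description precedes it below -/
import Mathlib

section
/- Let f : ℂ → ℝ be a real-differentiable (C¹) function, let g, η : V → ℂ be functions on an open neighborhood V of the origin of ℂ × ℝ with η real-differentiable, and let h : V → ℂ be a C¹ function with L⁰h = 0 on V and h(p) ≠ 0 for all p ∈ V. Suppose u₁ is a C¹ function on an open neighborhood U₁ of the origin with L⁰u₁ = e^η·g on U₁, and u₂ is a C¹ function on an open neighborhood U₂ of the origin with L⁰u₂ = (e^η + h)·g on U₂. Then the function u := (u₂ − u₁)/h is C¹ on V ∩ U₁ ∩ U₂ and satisfies L⁰u = g there. Consequently, if the equation L⁰u = g is not locally solvable at the origin, then at least one of the two equations L⁰u = e^η·g and L⁰u = (e^η + h)·g is not locally solvable at the origin. -/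
/-- The Wirtinger derivative `∂̄u` in the complex variable `z` of a function
`u : ℂ × ℝ → ℂ`, computed from the real Fréchet derivative. -/
noncomputable def wirt (u : ℂ × ℝ → ℂ) (p : ℂ × ℝ) : ℂ :=
  (1 / 2 : ℂ) * (fderiv ℝ u p (1, 0) + Complex.I * fderiv ℝ u p (Complex.I, 0))

/-- The partial derivative `∂u/∂s` in the real variable `s` of `u : ℂ × ℝ → ℂ`. -/
noncomputable def pds (u : ℂ × ℝ → ℂ) (p : ℂ × ℝ) : ℂ :=
  fderiv ℝ u p (0, 1)

/-- The Wirtinger derivative `∂̄f` of a real-valued function `f : ℂ → ℝ`, as a complex number. -/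
noncomputable def wirtf (f : ℂ → ℝ) (z : ℂ) : ℂ :=
  (1 / 2 : ℂ) * ((fderiv ℝ f z 1 : ℂ) + Complex.I * (fderiv ℝ f z Complex.I : ℂ))

/-- The operator `L⁰u = ∂̄u − i·(∂̄f)·∂u/∂s`. -/
noncomputable def L0 (f : ℂ → ℝ) (u : ℂ × ℝ → ℂ) (p : ℂ × ℝ) : ℂ :=
  wirt u p - Complex.I * wirtf f p.1 * pds u p

/-- The equation `L⁰u = G` is locally solvable at the origin: there exist an open
neighborhood `U` of `(0,0)` in `ℂ × ℝ` and a `C¹` function `u` on `U` with `L⁰u = G` on `U`. -/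
def LocSolv (f : ℂ → ℝ) (G : ℂ × ℝ → ℂ) : Prop :=
  ∃ U : Set (ℂ × ℝ), IsOpen U ∧ ((0, 0) : ℂ × ℝ) ∈ U ∧
    ∃ u : ℂ × ℝ → ℂ, ContDiffOn ℝ 1 u U ∧ ∀ p ∈ U, L0 f u p = G p

/-- If `h` is `C¹`, nonvanishing and `L⁰`-flat on a neighborhood `V` of the origin, and
`u₁, u₂` are `C¹` solutions of `L⁰u₁ = e^η·g` and `L⁰u₂ = (e^η + h)·g` near the origin,
then `(u₂ − u₁)/h` is a `C¹` solution of `L⁰u = g` on `V ∩ U₁ ∩ U₂`. Consequently, if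
`L⁰u = g` is not locally solvable at the origin, then one of the equations
`L⁰u = e^η·g`, `L⁰u = (e^η + h)·g` is not locally solvable at the origin. -/
theorem quotient_solution_and_nonsolvability (f : ℂ → ℝ) (hf : ContDiff ℝ 1 f)
    (V : Set (ℂ × ℝ)) (hV : IsOpen V) (hV0 : ((0, 0) : ℂ × ℝ) ∈ V)
    (g η h : ℂ × ℝ → ℂ)
    (hη : ∀ p ∈ V, DifferentiableAt ℝ η p)
    (hh : ContDiffOn ℝ 1 h V) (hhL : ∀ p ∈ V, L0 f h p = 0)
    (hhne : ∀ p ∈ V, h p ≠ 0) :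
    (∀ (U₁ U₂ : Set (ℂ × ℝ)) (u₁ u₂ : ℂ × ℝ → ℂ),
      IsOpen U₁ → ((0, 0) : ℂ × ℝ) ∈ U₁ → ContDiffOn ℝ 1 u₁ U₁ →
      (∀ p ∈ U₁, L0 f u₁ p = Complex.exp (η p) * g p) →
      IsOpen U₂ → ((0, 0) : ℂ × ℝ) ∈ U₂ → ContDiffOn ℝ 1 u₂ U₂ →
      (∀ p ∈ U₂, L0 f u₂ p = (Complex.exp (η p) + h p) * g p) →
      ContDiffOn ℝ 1 (fun q => (u₂ q - u₁ q) / h q) (V ∩ U₁ ∩ U₂) ∧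
      ∀ p ∈ V ∩ U₁ ∩ U₂, L0 f (fun q => (u₂ q - u₁ q) / h q) p = g p) ∧
    (¬ LocSolv f g →
      ¬ LocSolv f (fun p => Complex.exp (η p) * g p) ∨
      ¬ LocSolv f (fun p => (Complex.exp (η p) + h p) * g p)) := by
  have key : ∀ (U₁ U₂ : Set (ℂ × ℝ)) (u₁ u₂ : ℂ × ℝ → ℂ),
      IsOpen U₁ → ((0, 0) : ℂ × ℝ) ∈ U₁ → ContDiffOn ℝ 1 u₁ U₁ →
      (∀ p ∈ U₁, L0 f u₁ p = Complex.exp (η p) * g p) →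
      IsOpen U₂ → ((0, 0) : ℂ × ℝ) ∈ U₂ → ContDiffOn ℝ 1 u₂ U₂ →
      (∀ p ∈ U₂, L0 f u₂ p = (Complex.exp (η p) + h p) * g p) →
      ContDiffOn ℝ 1 (fun q => (u₂ q - u₁ q) / h q) (V ∩ U₁ ∩ U₂) ∧
      ∀ p ∈ V ∩ U₁ ∩ U₂, L0 f (fun q => (u₂ q - u₁ q) / h q) p = g p := by
    intro U₁ U₂ u₁ u₂ hU₁ _ hu₁ hL₁ hU₂ _ hu₂ hL₂
    have hW : IsOpen (V ∩ U₁ ∩ U₂) := (hV.inter hU₁).inter hU₂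
    have hC : ContDiffOn ℝ 1 (fun q => (u₂ q - u₁ q) / h q) (V ∩ U₁ ∩ U₂) := by
      have a1 : ContDiffOn ℝ 1 u₁ (V ∩ U₁ ∩ U₂) := hu₁.mono (fun q hq => hq.1.2)
      have a2 : ContDiffOn ℝ 1 u₂ (V ∩ U₁ ∩ U₂) := hu₂.mono (fun q hq => hq.2)
      have a3 : ContDiffOn ℝ 1 h (V ∩ U₁ ∩ U₂) := hh.mono (fun q hq => hq.1.1)
      have a4 : ContDiffOn ℝ 1 (fun q => (h q)⁻¹) (V ∩ U₁ ∩ U₂) :=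
        a3.inv (fun q hq => hhne q hq.1.1)
      simpa only [div_eq_mul_inv] using (a2.sub a1).mul a4
    refine ⟨hC, ?_⟩
    intro p hp
    have d1 : DifferentiableAt ℝ u₁ p :=
      (hu₁.contDiffAt (hU₁.mem_nhds hp.1.2)).differentiableAt one_ne_zero
    have d2 : DifferentiableAt ℝ u₂ p :=
      (hu₂.contDiffAt (hU₂.mem_nhds hp.2)).differentiableAt one_ne_zero
    have d3 : DifferentiableAt ℝ h p :=
      (hh.contDiffAt (hV.mem_nhds hp.1.1)).differentiableAt one_ne_zero
    have e1 := hL₁ p hp.1.2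
    have e2 := hL₂ p hp.2
    have e3 := hhL p hp.1.1
    have hne := hhne p hp.1.1
    have d4 : DifferentiableAt ℝ (fun q => (u₂ q - u₁ q) / h q) p :=
      (hC.contDiffAt (hW.mem_nhds hp)).differentiableAt one_ne_zero
    have hev : (fun q => u₂ q - u₁ q) =ᶠ[nhds p]
        (fun q => (fun q => (u₂ q - u₁ q) / h q) q * h q) := by
      filter_upwards [hV.mem_nhds hp.1.1] with q hq
      exact (div_mul_cancel₀ _ (hhne q hq)).symm
    generalize (fun q => (u₂ q - u₁ q) / h q) = w at d4 hev ⊢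
    have hD := (d2.hasFDerivAt.sub d1.hasFDerivAt).unique
      ((d4.hasFDerivAt.mul d3.hasFDerivAt).congr_of_eventuallyEq hev)
    have hv : ∀ v, fderiv ℝ u₂ p v - fderiv ℝ u₁ p v
        = w p * fderiv ℝ h p v + h p * fderiv ℝ w p v := by
      intro v
      have := congrArg (fun T => T v) hD
      simpa using this
    have h1 := hv (1, 0)
    have h2 := hv (Complex.I, 0)
    have h3 := hv (0, 1)
    unfold L0 wirt pds at *
    apply mul_left_cancel₀ hne
    linear_combination e2 - e1 - w p * e3 - (1 / 2) * h1 - (1 / 2) * Complex.I * h2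
      + Complex.I * wirtf f p.1 * h3
  refine ⟨key, ?_⟩
  intro hns
  by_contra hcon
  push Not at hcon
  obtain ⟨⟨U₁, o1, m1, u₁, c1, s1⟩, ⟨U₂, o2, m2, u₂, c2, s2⟩⟩ := hcon
  obtain ⟨hc, hs⟩ := key U₁ U₂ u₁ u₂ o1 m1 c1 s1 o2 m2 c2 s2
  exact hns ⟨V ∩ U₁ ∩ U₂, (hV.inter o1).inter o2, ⟨⟨hV0, m1⟩, m2⟩, _, hc, hs⟩
end

section
/- (Lemma 1 of the paper.) Let f : ℂ → ℝ be real analytic (analytic over ℝ as a function of the underlying real variables) and let g : ℂ × ℝ → ℂ be a smooth function with compact support. Suppose that the equation L⁰u = g is NOT locally solvable at the origin. Then there exist an open neighborhood V of the origin of ℂ × ℝ and a real analytic function η : V → ℂ with (L⁰η)(0,0) ≠ 0 such that the equation L⁰u = e^η·g is not locally solvable at the origin. -/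
noncomputable def etaAux (c : ℂ) (p : ℂ × ℝ) : ℂ :=
  Complex.log (1 + c * (starRingEnd ℂ) p.1)

noncomputable def linAux (c : ℂ) : ℂ × ℝ →L[ℝ] ℂ :=
  c • ((Complex.conjCLE : ℂ →L[ℝ] ℂ).comp (ContinuousLinearMap.fst ℝ ℂ ℝ))

lemma linAux_apply (c : ℂ) (p : ℂ × ℝ) : linAux c p = c * (starRingEnd ℂ) p.1 := by
  simp [linAux]

lemma etaAux_eq (c : ℂ) : etaAux c = fun p => Complex.log (1 + linAux c p) := by
  funext p
  rw [etaAux, linAux_apply]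

lemma slit_aux (c : ℂ) (hc : ‖c‖ = 1) (p : ℂ × ℝ) (hp : p ∈ Metric.ball (0 : ℂ × ℝ) 1) :
    1 + linAux c p ∈ Complex.slitPlane := by
  left
  have h1 : ‖p.1‖ < 1 := lt_of_le_of_lt (norm_fst_le p) (by simpa using hp)
  have h2 : ‖linAux c p‖ < 1 := by
    rw [linAux_apply, norm_mul, hc, one_mul, RCLike.norm_conj]
    exact h1
  have h3 := Complex.abs_re_le_norm (linAux c p)
  have h4 := neg_abs_le (linAux c p).re
  simp only [Complex.add_re, Complex.one_re]
  linarith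

lemma eta_analytic (c : ℂ) (hc : ‖c‖ = 1) (p : ℂ × ℝ) (hp : p ∈ Metric.ball (0 : ℂ × ℝ) 1) :
    AnalyticAt ℝ (etaAux c) p := by
  rw [etaAux_eq]
  have h1 : AnalyticAt ℝ Complex.log (1 + linAux c p) :=
    (analyticAt_clog (slit_aux c hc p hp)).restrictScalars
  have h2 : AnalyticAt ℝ (fun q => 1 + linAux c q) p :=
    analyticAt_const.add ((linAux c).analyticAt p)
  exact AnalyticAt.comp (g := Complex.log) (f := fun q => 1 + linAux c q) h1 h2

lemma eta_exp (c : ℂ) (hc : ‖c‖ = 1) (p : ℂ × ℝ) (hp : p ∈ Metric.ball (0 : ℂ × ℝ) 1) :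
    Complex.exp (etaAux c p) = 1 + linAux c p := by
  rw [etaAux_eq]
  exact Complex.exp_log (Complex.slitPlane_ne_zero (slit_aux c hc p hp))

lemma eta_L0 (f : ℂ → ℝ) (c : ℂ) : L0 f (etaAux c) ((0, 0) : ℂ × ℝ) = c := by
  have hd : HasFDerivAt (etaAux c) (linAux c) ((0, 0) : ℂ × ℝ) := by
    rw [etaAux_eq]
    have h1 : HasFDerivAt (fun q => 1 + linAux c q) (linAux c) ((0, 0) : ℂ × ℝ) :=
      (linAux c).hasFDerivAt.const_add 1
    have h0 : linAux c ((0, 0) : ℂ × ℝ) = 0 := by simp [linAux_apply]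
    have h2 : HasDerivAt Complex.log (1 : ℂ)⁻¹ (1 + linAux c ((0, 0) : ℂ × ℝ)) := by
      rw [h0, add_zero]
      exact Complex.hasDerivAt_log (by simp)
    have h3 := h2.hasFDerivAt.restrictScalars ℝ
    have h4 := HasFDerivAt.comp (g := Complex.log) (f := fun q => 1 + linAux c q) ((0, 0) : ℂ × ℝ) h3 h1
    refine h4.congr_fderiv ?_
    refine ContinuousLinearMap.ext fun q => ?_
    simp
  simp only [L0, wirt, pds, hd.fderiv, linAux_apply]
  simp only [map_one, map_zero, Complex.conj_I]
  linear_combination (-c / 2) * Complex.I_mul_I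

lemma combine (f : ℂ → ℝ) (g : ℂ × ℝ → ℂ)
    (h1 : LocSolv f (fun p => Complex.exp (etaAux 1 p) * g p))
    (h2 : LocSolv f (fun p => Complex.exp (etaAux (-1) p) * g p)) : LocSolv f g := by
  obtain ⟨U, hU, hU0, u, hu, hue⟩ := h1
  obtain ⟨W, hW, hW0, w, hw, hwe⟩ := h2
  refine ⟨(U ∩ W) ∩ Metric.ball 0 1, (hU.inter hW).inter Metric.isOpen_ball,
    ⟨⟨hU0, hW0⟩, Metric.mem_ball_self one_pos⟩, fun p => (1 / 2 : ℂ) * (u p + w p), ?_, ?_⟩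
  · exact contDiffOn_const.mul ((hu.mono fun p hp => hp.1.1).add (hw.mono fun p hp => hp.1.2))
  · rintro p ⟨⟨hpU, hpW⟩, hpb⟩
    have du : HasFDerivAt u (fderiv ℝ u p) p :=
      ((hu.contDiffAt (hU.mem_nhds hpU)).differentiableAt (by simp)).hasFDerivAt
    have dw : HasFDerivAt w (fderiv ℝ w p) p :=
      ((hw.contDiffAt (hW.mem_nhds hpW)).differentiableAt (by simp)).hasFDerivAt
    have d := (du.add dw).const_mul (1 / 2 : ℂ)
    have e : fderiv ℝ (fun p => (1 / 2 : ℂ) * (u p + w p)) p =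
      (1 / 2 : ℂ) • (fderiv ℝ u p + fderiv ℝ w p) := d.fderiv
    have e1 := hue p hpU
    have e2 := hwe p hpW
    simp only [eta_exp 1 (by simp) p hpb, eta_exp (-1) (by simp) p hpb, linAux_apply] at e1 e2
    simp only [L0, wirt, pds] at e1 e2 ⊢
    simp only [e, ContinuousLinearMap.smul_apply, ContinuousLinearMap.add_apply, smul_eq_mul]
    linear_combination (1 / 2 : ℂ) * e1 + (1 / 2 : ℂ) * e2

/-- Lemma 1 of the paper: if `f` is real analytic, `g` is smooth with compact support,
and `L⁰u = g` is not locally solvable at the origin, then there is a real analytic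
function `η` near the origin with `(L⁰η)(0,0) ≠ 0` such that `L⁰u = e^η·g` is not
locally solvable at the origin. -/
theorem exists_eta_nonsolvable (f : ℂ → ℝ) (hf : ∀ z : ℂ, AnalyticAt ℝ f z)
    (g : ℂ × ℝ → ℂ) (hg : ContDiff ℝ (⊤ : ℕ∞) g) (hgs : HasCompactSupport g)
    (hns : ¬ LocSolv f g) :
    ∃ V : Set (ℂ × ℝ), IsOpen V ∧ ((0, 0) : ℂ × ℝ) ∈ V ∧
      ∃ η : ℂ × ℝ → ℂ, (∀ p ∈ V, AnalyticAt ℝ η p) ∧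
        L0 f η ((0, 0) : ℂ × ℝ) ≠ 0 ∧
        ¬ LocSolv f (fun p => Complex.exp (η p) * g p) := by
  by_cases h1 : LocSolv f (fun p => Complex.exp (etaAux 1 p) * g p)
  · refine ⟨Metric.ball 0 1, Metric.isOpen_ball, Metric.mem_ball_self one_pos, etaAux (-1),
      fun p hp => eta_analytic _ (by simp) p hp, ?_, fun h2 => hns (combine f g h1 h2)⟩
    rw [eta_L0]
    simp
  · refine ⟨Metric.ball 0 1, Metric.isOpen_ball, Metric.mem_ball_self one_pos, etaAux 1,
      fun p hp => eta_analytic _ (by simp) p hp, ?_, h1⟩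
    rw [eta_L0]
    simp
end

section
/- (Cauchy–Kovalevskaya step in the proof of Lemma 1.) Let f : ℂ → ℝ and η : W → ℂ be real analytic on a neighborhood W of the origin of ℂ (respectively of ℂ × ℝ). Then there exist an open neighborhood U of the origin in ℂ × ℝ and a real analytic function v : U → ℂ such that L⁰v = 0 on U and v(z,s) = e^{η(z,s)} for every (z,s) ∈ U with Re z = 0. In particular v(0,0) = e^{η(0,0)} ≠ 0 and (e^η + v)(0,0) = 2e^{η(0,0)} ≠ 0. -/
/-- coordinates on `ℂ × ℂ` -/
noncomputable def cxCoord (b : Bool) : ℂ × ℂ →L[ℂ] ℂ :=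
  bif b then ContinuousLinearMap.fst ℂ ℂ ℂ else ContinuousLinearMap.snd ℂ ℂ ℂ

/-- basis of `ℝ × ℝ` -/
def rlBasis (b : Bool) : ℝ × ℝ := bif b then (1, 0) else (0, 1)

/-- complexified power series -/
noncomputable def cxSeries (p : FormalMultilinearSeries ℝ (ℝ × ℝ) ℂ) :
    FormalMultilinearSeries ℂ (ℂ × ℂ) ℂ := fun n =>
  ∑ s : Fin n → Bool, (p n (fun i => rlBasis (s i))) •
    (ContinuousMultilinearMap.mkPiAlgebra ℂ (Fin n) ℂ).compContinuousLinearMap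
      (fun i => cxCoord (s i))

lemma norm_cxCoord_le (b : Bool) : ‖cxCoord b‖ ≤ 1 := by
  cases b
  · exact ContinuousLinearMap.norm_snd_le ..
  · exact ContinuousLinearMap.norm_fst_le ..

lemma norm_rlBasis (b : Bool) : ‖rlBasis b‖ ≤ 1 := by
  cases b <;> simp [rlBasis, Prod.norm_def]

lemma norm_cxSeries_le (p : FormalMultilinearSeries ℝ (ℝ × ℝ) ℂ) (n : ℕ) :
    ‖cxSeries p n‖ ≤ 2 ^ n * ‖p n‖ := by
  unfold cxSeries
  refine (norm_sum_le _ _).trans ?_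
  have : ∀ s ∈ (Finset.univ : Finset (Fin n → Bool)), ‖(p n (fun i => rlBasis (s i))) •
    (ContinuousMultilinearMap.mkPiAlgebra ℂ (Fin n) ℂ).compContinuousLinearMap
      (fun i => cxCoord (s i))‖ ≤ ‖p n‖ := by
    intro s _
    rw [norm_smul]
    have h1 : ‖p n (fun i => rlBasis (s i))‖ ≤ ‖p n‖ := by
      refine ((p n).le_opNorm _).trans ?_
      refine mul_le_of_le_one_right (norm_nonneg _) ?_
      exact Finset.prod_le_one (fun _ _ => norm_nonneg _) (fun i _ => norm_rlBasis _)
    have h2 : ‖(ContinuousMultilinearMap.mkPiAlgebra ℂ (Fin n) ℂ).compContinuousLinearMap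
      (fun i => cxCoord (s i))‖ ≤ 1 := by
      refine (ContinuousMultilinearMap.norm_compContinuousLinearMap_le _ _).trans ?_
      rw [ContinuousMultilinearMap.norm_mkPiAlgebra, one_mul]
      exact Finset.prod_le_one (fun _ _ => norm_nonneg _) (fun i _ => norm_cxCoord_le _)
    calc _ ≤ ‖p n‖ * 1 := mul_le_mul h1 h2 (norm_nonneg _) (norm_nonneg _)
      _ = _ := mul_one _
  refine (Finset.sum_le_sum this).trans ?_
  simp

lemma cxSeries_apply (p : FormalMultilinearSeries ℝ (ℝ × ℝ) ℂ) (n : ℕ) (x y : ℝ) :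
    cxSeries p n (fun _ => ((x : ℂ), (y : ℂ))) = p n (fun _ => (x, y)) := by
  have h : (fun _ : Fin n => (x, y)) =
      fun _ : Fin n => ∑ b : Bool, (bif b then x else y) • rlBasis b := by
    funext i; simp [rlBasis]
  rw [h, ContinuousMultilinearMap.map_sum]
  simp only [ContinuousMultilinearMap.map_smul_univ]
  simp only [cxSeries, ContinuousMultilinearMap.sum_apply, ContinuousMultilinearMap.smul_apply,
    ContinuousMultilinearMap.compContinuousLinearMap_apply,
    ContinuousMultilinearMap.mkPiAlgebra_apply]
  refine Finset.sum_congr rfl fun s _ => ?_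
  rw [smul_eq_mul, mul_comm, Complex.real_smul, Complex.ofReal_prod]
  congr 1
  refine Finset.prod_congr rfl fun i _ => ?_
  cases s i <;> simp [cxCoord]

lemma exists_complexification (g : ℝ × ℝ → ℂ) (hg : AnalyticAt ℝ g (0, 0)) :
    ∃ G : ℂ × ℂ → ℂ, AnalyticAt ℂ G (0, 0) ∧
      ∀ᶠ q : ℝ × ℝ in nhds (0, 0), G ((q.1 : ℂ), (q.2 : ℂ)) = g q := by
  obtain ⟨p, r, hp⟩ := hg
  obtain ⟨r', hr'0, hr'⟩ := ENNReal.lt_iff_exists_nnreal_btwn.1 (hp.r_pos.trans_le hp.r_le)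
  obtain ⟨C, hC, hb⟩ := p.norm_mul_pow_le_of_lt_radius hr'
  have hrad : ((r' / 2 : NNReal) : ENNReal) ≤ (cxSeries p).radius := by
    refine (cxSeries p).le_radius_of_bound C fun n => ?_
    refine le_trans ?_ (hb n)
    calc _ ≤ (2 ^ n * ‖p n‖) * ((r' / 2 : NNReal) : ℝ) ^ n := by
          gcongr; exact norm_cxSeries_le p n
      _ = _ := by
          push_cast; rw [div_pow]; field_simp
  have hpos : 0 < (cxSeries p).radius := by
    refine lt_of_lt_of_le ?_ hrad
    have : (0 : NNReal) < r' := by exact_mod_cast hr'0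
    exact_mod_cast half_pos this
  have hG := (cxSeries p).hasFPowerSeriesOnBall hpos
  refine ⟨(cxSeries p).sum, hG.analyticAt, ?_⟩
  filter_upwards [hp.eventually_hasSum] with q hq
  have h0 : ((0, 0) : ℝ × ℝ) + q = q := by simp
  rw [h0] at hq
  rw [← hq.tsum_eq]
  simp only [FormalMultilinearSeries.sum, cxSeries_apply]

lemma L0_comp (f : ℂ → ℝ) (G : ℂ × ℂ → ℂ) (a b : ℂ × ℝ → ℂ) (p : ℂ × ℝ)
    (hG : DifferentiableAt ℂ G (a p, b p)) (ha : DifferentiableAt ℝ a p)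
    (hb : DifferentiableAt ℝ b p) (ha0 : L0 f a p = 0) (hb0 : L0 f b p = 0) :
    L0 f (fun q => G (a q, b q)) p = 0 := by
  have h := (hG.hasFDerivAt.restrictScalars ℝ).comp p (ha.hasFDerivAt.prodMk hb.hasFDerivAt)
  have h' : fderiv ℝ (fun q => G (a q, b q)) p = _ := h.fderiv
  have key : ∀ d, fderiv ℝ (fun q => G (a q, b q)) p d =
      fderiv ℝ a p d * fderiv ℂ G (a p, b p) (1, 0) +
      fderiv ℝ b p d * fderiv ℂ G (a p, b p) (0, 1) := by
    intro d
    rw [h', ← smul_eq_mul, ← smul_eq_mul, ← map_smul, ← map_smul, ← map_add]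
    simp
  simp only [L0, wirt, pds] at *
  simp only [key]
  linear_combination fderiv ℂ G (a p, b p) (1, 0) * ha0 + fderiv ℂ G (a p, b p) (0, 1) * hb0

lemma L0_zeta (f : ℂ → ℝ) (p : ℂ × ℝ) : L0 f (fun q => -Complex.I * q.1) p = 0 := by
  have h : HasFDerivAt (𝕜 := ℝ) (fun q : ℂ × ℝ => -Complex.I * q.1)
    ((-Complex.I) • ContinuousLinearMap.fst ℝ ℂ ℝ) p := hasFDerivAt_fst.const_mul _
  simp only [L0, wirt, pds, h.fderiv]
  simp

lemma L0_const (f : ℂ → ℝ) (p : ℂ × ℝ) : L0 f (fun _ => 0) p = 0 := by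
  simp [L0, wirt, pds]

lemma L0_sigma (f : ℂ → ℝ) (k : ℂ × ℝ → ℂ) (p : ℂ × ℝ) (hf : DifferentiableAt ℝ f p.1)
    (hk : DifferentiableAt ℝ k p) (hk0 : L0 f k p = 0) :
    L0 f (fun q => (q.2 : ℂ) + Complex.I * (f q.1 : ℂ) - Complex.I * k q) p = 0 := by
  have h1 : HasFDerivAt (𝕜 := ℝ) (fun q : ℂ × ℝ => (q.2 : ℂ))
      (Complex.ofRealCLM.comp (ContinuousLinearMap.snd ℝ ℂ ℝ)) p :=
    Complex.ofRealCLM.hasFDerivAt.comp p hasFDerivAt_snd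
  have h2 : HasFDerivAt (𝕜 := ℝ) (fun q : ℂ × ℝ => (f q.1 : ℂ))
      (Complex.ofRealCLM.comp ((fderiv ℝ f p.1).comp (ContinuousLinearMap.fst ℝ ℂ ℝ))) p :=
    Complex.ofRealCLM.hasFDerivAt.comp p (hf.hasFDerivAt.comp p hasFDerivAt_fst)
  have h := (h1.add (h2.const_mul Complex.I)).sub (hk.hasFDerivAt.const_mul Complex.I)
  have h' : fderiv ℝ (fun q : ℂ × ℝ => (q.2 : ℂ) + Complex.I * (f q.1 : ℂ) - Complex.I * k q) p
    = _ := h.fderiv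
  simp only [L0, wirt, pds, wirtf] at *
  simp only [h']
  simp
  linear_combination (-Complex.I) * hk0

/-- Cauchy–Kovalevskaya step: for `f` real analytic near `0 ∈ ℂ` and `η` real analytic
near the origin of `ℂ × ℝ`, there is a real analytic local solution `v` of `L⁰v = 0`
with Cauchy data `v = e^η` on `{Re z = 0}`; in particular `v(0,0) = e^{η(0,0)} ≠ 0` and
`(e^η + v)(0,0) = 2·e^{η(0,0)} ≠ 0`. -/
theorem cauchy_kovalevskaya_step (f : ℂ → ℝ)
    (Wf : Set ℂ) (hWf : IsOpen Wf) (hWf0 : (0 : ℂ) ∈ Wf)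
    (hf : ∀ z ∈ Wf, AnalyticAt ℝ f z)
    (η : ℂ × ℝ → ℂ) (Wη : Set (ℂ × ℝ)) (hWη : IsOpen Wη) (hWη0 : ((0, 0) : ℂ × ℝ) ∈ Wη)
    (hη : ∀ p ∈ Wη, AnalyticAt ℝ η p) :
    ∃ U : Set (ℂ × ℝ), IsOpen U ∧ ((0, 0) : ℂ × ℝ) ∈ U ∧
      ∃ v : ℂ × ℝ → ℂ, (∀ p ∈ U, AnalyticAt ℝ v p) ∧
        (∀ p ∈ U, L0 f v p = 0) ∧
        (∀ p ∈ U, p.1.re = 0 → v p = Complex.exp (η p)) ∧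
        v ((0, 0) : ℂ × ℝ) = Complex.exp (η ((0, 0) : ℂ × ℝ)) ∧
        Complex.exp (η ((0, 0) : ℂ × ℝ)) ≠ 0 ∧
        Complex.exp (η ((0, 0) : ℂ × ℝ)) + v ((0, 0) : ℂ × ℝ)
          = 2 * Complex.exp (η ((0, 0) : ℂ × ℝ)) ∧
        (2 : ℂ) * Complex.exp (η ((0, 0) : ℂ × ℝ)) ≠ 0 := by
  have hf0 := hf 0 hWf0
  have hη0 := hη _ hWη0
  have hI : AnalyticAt ℝ (fun q : ℝ × ℝ => Complex.I * (q.1 : ℂ)) (0, 0) :=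
    analyticAt_const.mul ((Complex.ofRealCLM.analyticAt _).comp analyticAt_fst)
  have hg1 : AnalyticAt ℝ (fun q : ℝ × ℝ => (f (Complex.I * (q.1 : ℂ)) : ℂ)) (0, 0) := by
    refine (Complex.ofRealCLM.analyticAt _).comp ?_
    refine AnalyticAt.comp (g := f) ?_ hI
    simpa using hf0
  have hg2 : AnalyticAt ℝ (fun q : ℝ × ℝ => Complex.exp (η (Complex.I * (q.1 : ℂ), q.2))) (0, 0) := by
    have h1 : AnalyticAt ℝ (fun q : ℝ × ℝ => η (Complex.I * (q.1 : ℂ), q.2)) (0, 0) := by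
      refine AnalyticAt.comp (g := η) ?_ (hI.prod analyticAt_snd)
      simpa using hη0
    exact AnalyticAt.comp (g := Complex.exp) (analyticAt_cexp.restrictScalars) h1
  obtain ⟨H, hH, hHe⟩ := exists_complexification _ hg1
  obtain ⟨G, hG, hGe⟩ := exists_complexification _ hg2
  set k : ℂ × ℝ → ℂ := fun q => H (-Complex.I * q.1, 0) with hk
  set σ : ℂ × ℝ → ℂ := fun q => (q.2 : ℂ) + Complex.I * (f q.1 : ℂ) - Complex.I * k q with hσ
  set v : ℂ × ℝ → ℂ := fun q => G (-Complex.I * q.1, σ q) with hv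
  have hζa : ∀ p, AnalyticAt ℝ (fun q : ℂ × ℝ => -Complex.I * q.1) p := fun p =>
    analyticAt_const.mul analyticAt_fst
  have hka : ∀ p : ℂ × ℝ, AnalyticAt ℂ H (-Complex.I * p.1, 0) → AnalyticAt ℝ k p := by
    intro p hp
    exact AnalyticAt.comp (g := H) (f := fun q : ℂ × ℝ => ((-Complex.I * q.1, 0) : ℂ × ℂ))
      hp.restrictScalars ((hζa p).prod analyticAt_const)
  have hσa : ∀ p : ℂ × ℝ, AnalyticAt ℝ f p.1 → AnalyticAt ℝ k p → AnalyticAt ℝ σ p := by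
    intro p hp hkp
    refine AnalyticAt.sub (AnalyticAt.add ?_ (analyticAt_const.mul ?_)) (analyticAt_const.mul hkp)
    · exact (Complex.ofRealCLM.analyticAt _).comp analyticAt_snd
    · exact (Complex.ofRealCLM.analyticAt _).comp (AnalyticAt.comp (g := f) hp analyticAt_fst)
  have hva : ∀ p : ℂ × ℝ, AnalyticAt ℂ G (-Complex.I * p.1, σ p) → AnalyticAt ℝ σ p →
      AnalyticAt ℝ v p := by
    intro p hp hσp
    exact AnalyticAt.comp (g := G) (f := fun q : ℂ × ℝ => ((-Complex.I * q.1, σ q) : ℂ × ℂ))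
      hp.restrictScalars ((hζa p).prod hσp)
  have hka0 : AnalyticAt ℝ k (0, 0) := hka _ (by simpa using hH)
  have hσa0 : AnalyticAt ℝ σ (0, 0) := hσa _ hf0 hka0
  have hσ0 : σ (0, 0) = 0 := by
    have := hHe.self_of_nhds
    simp at this
    simp [hσ, hk, this]
  have e1 : ∀ᶠ p : ℂ × ℝ in nhds (0, 0), AnalyticAt ℝ f p.1 :=
    continuousAt_fst.eventually hf0.eventually_analyticAt
  have e2 : ∀ᶠ p : ℂ × ℝ in nhds (0, 0), AnalyticAt ℂ H (-Complex.I * p.1, 0) := by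
    have hc : ContinuousAt (fun p : ℂ × ℝ => ((-Complex.I * p.1, 0) : ℂ × ℂ)) (0, 0) := by fun_prop
    refine hc.eventually ?_
    simpa using hH.eventually_analyticAt
  have e3 : ∀ᶠ p : ℂ × ℝ in nhds (0, 0), AnalyticAt ℂ G (-Complex.I * p.1, σ p) := by
    have hc : ContinuousAt (fun p : ℂ × ℝ => ((-Complex.I * p.1, σ p) : ℂ × ℂ)) (0, 0) :=
      (hζa _).continuousAt.prodMk hσa0.continuousAt
    refine hc.eventually ?_
    simpa [hσ0] using hG.eventually_analyticAt
  have hc : ContinuousAt (fun p : ℂ × ℝ => ((p.1.im, p.2) : ℝ × ℝ)) (0, 0) := by fun_prop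
  have hc0 : ContinuousAt (fun p : ℂ × ℝ => ((p.1.im, 0) : ℝ × ℝ)) (0, 0) := by fun_prop
  have e4 := hc0.eventually (by simpa using hHe)
  have e5 := hc.eventually (by simpa using hGe)
  obtain ⟨U, hU, hUo, hU0⟩ := eventually_nhds_iff.1 (e1.and (e2.and (e3.and (e4.and e5))))
  have hbd : ∀ p ∈ U, p.1.re = 0 → v p = Complex.exp (η p) := by
    intro p hp hre
    obtain ⟨-, -, -, h4, h5⟩ := hU p hp
    have hz : p.1 = Complex.I * (p.1.im : ℂ) := by
      apply Complex.ext <;> simp [hre]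
    have hζ : -Complex.I * p.1 = (p.1.im : ℂ) := by
      apply Complex.ext <;> simp [hre]
    simp only [Complex.ofReal_zero, ← hz] at h4 h5
    have hs : σ p = (p.2 : ℂ) := by
      simp only [hσ, hk, hζ, h4]; ring
    simp only [hv, hζ, hs, h5]
  have h00 := hbd _ hU0 (by simp)
  refine ⟨U, hUo, hU0, v, ?_, ?_, hbd, h00, Complex.exp_ne_zero _, ?_, ?_⟩
  · intro p hp
    obtain ⟨h1, h2, h3, -, -⟩ := hU p hp
    exact hva p h3 (hσa p h1 (hka p h2))
  · intro p hp
    obtain ⟨h1, h2, h3, -, -⟩ := hU p hp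
    refine L0_comp f G _ σ p h3.differentiableAt (hζa p).differentiableAt
      (hσa p h1 (hka p h2)).differentiableAt (L0_zeta f p) ?_
    refine L0_sigma f k p h1.differentiableAt (hka p h2).differentiableAt ?_
    exact L0_comp f H _ (fun _ => 0) p h2.differentiableAt (hζa p).differentiableAt
      (differentiableAt_const _) (L0_zeta f p) (L0_const f p)
  · rw [h00]; ring
  · exact mul_ne_zero two_ne_zero (Complex.exp_ne_zero _)
end

section
/- Let f : ℂ → ℝ be real-differentiable (C¹), let g be continuous and η be real-differentiable (C¹) on a neighborhood of the origin of ℂ × ℝ, and let L be the associated operator in the variables (z,s,t). Let U be an open neighborhood of the origin in ℂ × ℝ × ℝ and v : U → ℂ a C¹ function such that the function w(z,s,t) := s + i·f(z) + t·v(z,s,t) satisfies Lw = 0 on U. Then the function u₀(z,s) := v(z,s,0)·e^{η(z,s)} is C¹ on a neighborhood of the origin of ℂ × ℝ and satisfies L⁰u₀ = −e^η·g there; in particular the equation L⁰u = e^η·g is locally solvable at the origin (with solution −u₀). -/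
/-- The Wirtinger derivative `∂̄w` in the complex variable `z` of a function
`w : ℂ × ℝ × ℝ → ℂ`. -/
noncomputable def wirt3 (w : ℂ × ℝ × ℝ → ℂ) (p : ℂ × ℝ × ℝ) : ℂ :=
  (1 / 2 : ℂ) * (fderiv ℝ w p (1, 0, 0) + Complex.I * fderiv ℝ w p (Complex.I, 0, 0))

/-- The partial derivative `∂w/∂s` of `w : ℂ × ℝ × ℝ → ℂ`. -/
noncomputable def pds3 (w : ℂ × ℝ × ℝ → ℂ) (p : ℂ × ℝ × ℝ) : ℂ :=
  fderiv ℝ w p (0, 1, 0)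

/-- The partial derivative `∂w/∂t` of `w : ℂ × ℝ × ℝ → ℂ`. -/
noncomputable def pdt3 (w : ℂ × ℝ × ℝ → ℂ) (p : ℂ × ℝ × ℝ) : ℂ :=
  fderiv ℝ w p (0, 0, 1)

/-- The operator
`Lw = ∂̄w − i·(∂̄f)·∂w/∂s + t·( g·∂w/∂s + (L⁰η)·∂w/∂t )` on functions of `(z,s,t)`. -/
noncomputable def Lop (f : ℂ → ℝ) (g η : ℂ × ℝ → ℂ) (w : ℂ × ℝ × ℝ → ℂ)
    (p : ℂ × ℝ × ℝ) : ℂ :=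
  wirt3 w p - Complex.I * wirtf f p.1 * pds3 w p
    + (p.2.2 : ℂ) * (g (p.1, p.2.1) * pds3 w p + L0 f η (p.1, p.2.1) * pdt3 w p)

theorem aux_fderiv (f : ℂ → ℝ) (hf : ContDiff ℝ 1 f) (v : ℂ × ℝ × ℝ → ℂ) (p : ℂ × ℝ × ℝ)
    (hv : DifferentiableAt ℝ v p) (h : ℂ × ℝ × ℝ) :
    fderiv ℝ (fun q : ℂ × ℝ × ℝ =>
      ((q.2.1 : ℂ) + Complex.I * (f q.1 : ℂ)) + (q.2.2 : ℂ) * v q) p h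
    = (h.2.1 : ℂ) + Complex.I * (fderiv ℝ f p.1 h.1 : ℂ)
      + ((p.2.2 : ℂ) * fderiv ℝ v p h + (h.2.2 : ℂ) * v p) := by
  have h1 : HasFDerivAt (fun q : ℂ × ℝ × ℝ => (q.2.1 : ℂ))
      (Complex.ofRealCLM.comp ((ContinuousLinearMap.fst ℝ ℝ ℝ).comp
        (ContinuousLinearMap.snd ℝ ℂ (ℝ × ℝ)))) p :=
    (Complex.ofRealCLM.comp ((ContinuousLinearMap.fst ℝ ℝ ℝ).comp
        (ContinuousLinearMap.snd ℝ ℂ (ℝ × ℝ)))).hasFDerivAt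
  have h2 : HasFDerivAt (fun q : ℂ × ℝ × ℝ => (q.2.2 : ℂ))
      (Complex.ofRealCLM.comp ((ContinuousLinearMap.snd ℝ ℝ ℝ).comp
        (ContinuousLinearMap.snd ℝ ℂ (ℝ × ℝ)))) p :=
    (Complex.ofRealCLM.comp ((ContinuousLinearMap.snd ℝ ℝ ℝ).comp
        (ContinuousLinearMap.snd ℝ ℂ (ℝ × ℝ)))).hasFDerivAt
  have h3 : HasFDerivAt (fun q : ℂ × ℝ × ℝ => (f q.1 : ℂ))
      (Complex.ofRealCLM.comp ((fderiv ℝ f p.1).comp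
        (ContinuousLinearMap.fst ℝ ℂ (ℝ × ℝ)))) p := by
    have hf' := ((hf.differentiable (by norm_num)) p.1).hasFDerivAt
    exact Complex.ofRealCLM.hasFDerivAt.comp p (hf'.comp p hasFDerivAt_fst)
  have h4 := (h1.add (h3.const_mul Complex.I)).add (h2.mul hv.hasFDerivAt)
  have h5 := h4.fderiv
  refine (DFunLike.congr_fun h5 h).trans ?_
  simp
  ring

theorem aux_slice (v : ℂ × ℝ × ℝ → ℂ) (η : ℂ × ℝ → ℂ) (p : ℂ × ℝ)
    (hv : DifferentiableAt ℝ v (p.1, p.2, 0)) (hη : DifferentiableAt ℝ η p) (h : ℂ × ℝ) :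
    fderiv ℝ (fun q : ℂ × ℝ => v (q.1, q.2, 0) * Complex.exp (η q)) p h
    = Complex.exp (η p) * (fderiv ℝ v (p.1, p.2, 0) (h.1, h.2, 0)
      + v (p.1, p.2, 0) * fderiv ℝ η p h) := by
  have h1 : HasFDerivAt (fun q : ℂ × ℝ => (q.1, q.2, (0:ℝ)))
      ((ContinuousLinearMap.fst ℝ ℂ ℝ).prod ((ContinuousLinearMap.snd ℝ ℂ ℝ).prod 0)) p :=
    hasFDerivAt_fst.prodMk (hasFDerivAt_snd.prodMk (hasFDerivAt_const _ _))
  have h2 : HasFDerivAt (fun q : ℂ × ℝ => v (q.1, q.2, 0)) _ p :=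
    HasFDerivAt.comp p (f := fun q : ℂ × ℝ => (q.1, q.2, (0:ℝ))) hv.hasFDerivAt h1
  have h3 := h2.mul hη.hasFDerivAt.cexp
  refine (DFunLike.congr_fun h3.fderiv h).trans ?_
  simp
  ring

/-- If `w(z,s,t) = s + i·f(z) + t·v(z,s,t)` satisfies `Lw = 0` near the origin for a `C¹`
function `v`, then `u₀(z,s) = v(z,s,0)·e^{η(z,s)}` is `C¹` near the origin and satisfies
`L⁰u₀ = −e^η·g`; in particular `L⁰u = e^η·g` is locally solvable at the origin. -/
theorem solvable_of_extension (f : ℂ → ℝ) (hf : ContDiff ℝ 1 f)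
    (g η : ℂ × ℝ → ℂ) (W : Set (ℂ × ℝ)) (hW : IsOpen W) (hW0 : ((0, 0) : ℂ × ℝ) ∈ W)
    (hg : ContinuousOn g W) (hη : ContDiffOn ℝ 1 η W)
    (U : Set (ℂ × ℝ × ℝ)) (hU : IsOpen U) (hU0 : ((0, 0, 0) : ℂ × ℝ × ℝ) ∈ U)
    (v : ℂ × ℝ × ℝ → ℂ) (hv : ContDiffOn ℝ 1 v U)
    (hw : ∀ p ∈ U, Lop f g η
      (fun q => ((q.2.1 : ℂ) + Complex.I * (f q.1 : ℂ)) + (q.2.2 : ℂ) * v q) p = 0) :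
    ∃ W' : Set (ℂ × ℝ), IsOpen W' ∧ ((0, 0) : ℂ × ℝ) ∈ W' ∧
      ContDiffOn ℝ 1 (fun p : ℂ × ℝ => v (p.1, p.2, 0) * Complex.exp (η p)) W' ∧
      (∀ p ∈ W', L0 f (fun q : ℂ × ℝ => v (q.1, q.2, 0) * Complex.exp (η q)) p
        = -(Complex.exp (η p) * g p)) ∧
      LocSolv f (fun p => Complex.exp (η p) * g p) := by
  have hcont : Continuous (fun p : ℂ × ℝ => (p.1, p.2, (0:ℝ))) := by fun_prop
  have hO : IsOpen (W ∩ (fun p : ℂ × ℝ => (p.1, p.2, (0:ℝ))) ⁻¹' U) :=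
    hW.inter (hU.preimage hcont)
  have hC : ContDiffOn ℝ 1 (fun p : ℂ × ℝ => v (p.1, p.2, 0) * Complex.exp (η p))
      (W ∩ (fun p : ℂ × ℝ => (p.1, p.2, (0:ℝ))) ⁻¹' U) := by
    refine ContDiffOn.mul ?_ (hη.mono Set.inter_subset_left).cexp
    have hc : ContDiff ℝ 1 (fun p : ℂ × ℝ => (p.1, p.2, (0:ℝ))) := by fun_prop
    exact hv.comp hc.contDiffOn (fun p hp => hp.2)
  have hE : ∀ p ∈ W ∩ (fun p : ℂ × ℝ => (p.1, p.2, (0:ℝ))) ⁻¹' U,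
      L0 f (fun q : ℂ × ℝ => v (q.1, q.2, 0) * Complex.exp (η q)) p
        = -(Complex.exp (η p) * g p) := by
    rintro p ⟨hpW, hpU⟩
    have hpU' : (p.1, p.2, (0:ℝ)) ∈ U := hpU
    have dv : ∀ q ∈ U, DifferentiableAt ℝ v q := fun q hq =>
      (hv.differentiableOn (by norm_num)).differentiableAt (hU.mem_nhds hq)
    have dη : DifferentiableAt ℝ η p :=
      (hη.differentiableOn (by norm_num)).differentiableAt (hW.mem_nhds hpW)
    let F : ℝ → ℂ := fun t => wirt3 v (p.1, p.2, t)
      - Complex.I * wirtf f p.1 * pds3 v (p.1, p.2, t)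
      + g p * (1 + (t:ℂ) * pds3 v (p.1, p.2, t))
      + L0 f η p * (v (p.1, p.2, t) + (t:ℂ) * pdt3 v (p.1, p.2, t))
    have hγ : ContinuousAt (fun t : ℝ => (p.1, p.2, t)) 0 := by fun_prop
    have hcd : ContinuousAt (fun t : ℝ => fderiv ℝ v (p.1, p.2, t)) 0 :=
      ContinuousAt.comp (f := fun t : ℝ => (p.1, p.2, t)) (g := fderiv ℝ v)
        ((hv.continuousOn_fderiv_of_isOpen hU le_rfl).continuousAt (hU.mem_nhds hpU')) hγ
    have hcv : ContinuousAt (fun t : ℝ => v (p.1, p.2, t)) 0 :=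
      ContinuousAt.comp (f := fun t : ℝ => (p.1, p.2, t)) (g := v)
        (dv _ hpU').continuousAt hγ
    have hcdh : ∀ h, ContinuousAt (fun t : ℝ => fderiv ℝ v (p.1, p.2, t) h) 0 :=
      fun h => hcd.clm_apply continuousAt_const
    have hct : ContinuousAt (fun t : ℝ => (t:ℂ)) 0 := Complex.continuous_ofReal.continuousAt
    have hF : ContinuousAt F 0 := by
      have a1 := hcdh (1, 0, 0)
      have a2 := hcdh (Complex.I, 0, 0)
      have a3 := hcdh (0, 1, 0)
      have a4 := hcdh (0, 0, 1)
      exact (((continuousAt_const.mul (a1.add (continuousAt_const.mul a2))).sub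
        (continuousAt_const.mul a3)).add
        (continuousAt_const.mul (continuousAt_const.add (hct.mul a3)))).add
        (continuousAt_const.mul (hcv.add (hct.mul a4)))
    have hF0 : ∀ᶠ t in nhdsWithin (0:ℝ) {0}ᶜ, F t = 0 := by
      have hmem : ∀ᶠ t in nhds (0:ℝ), (p.1, p.2, t) ∈ U := hγ (hU.mem_nhds hpU')
      filter_upwards [hmem.filter_mono nhdsWithin_le_nhds, self_mem_nhdsWithin] with t ht ht0
      have ht0' : (t:ℂ) ≠ 0 := by exact_mod_cast ht0
      have h := hw _ ht
      have hd := dv _ ht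
      simp only [Lop, wirt3, pds3, pdt3, aux_fderiv f hf v _ hd] at h
      apply mul_left_cancel₀ ht0'
      rw [mul_zero, ← h]
      simp only [F, wirt3, pds3, pdt3, wirtf]
      simp
      ring
    have hz : F 0 = 0 := tendsto_nhds_unique
      (hF.tendsto.mono_left nhdsWithin_le_nhds)
      (tendsto_const_nhds.congr' (hF0.mono fun t ht => ht.symm))
    have hs := aux_slice v η p (dv _ hpU') dη
    simp only [F, wirt3, pds3, pdt3] at hz
    simp only [L0, wirt, pds, hs] at hz ⊢
    simp only [Complex.ofReal_zero, zero_mul, add_zero, mul_one] at hz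
    linear_combination Complex.exp (η p) * hz
  refine ⟨_, hO, ⟨hW0, hU0⟩, hC, hE, _, hO, ⟨hW0, hU0⟩, _, hC.neg, fun p hp => ?_⟩
  have h := hE p hp
  have hn : ∀ u : ℂ × ℝ → ℂ, L0 f (fun q => -u q) p = - L0 f u p := by
    intro u
    simp only [L0, wirt, pds, fderiv_fun_neg]
    simp
    ring
  refine (hn _).trans ?_
  rw [h, neg_neg]
end

section
/- (The Claim in Section 3: the function h = s + i·f(z) admits no CR extension.) Let f : ℂ → ℝ be real-differentiable (C¹), let g be continuous and η real-differentiable (C¹) on a neighborhood of the origin of ℂ × ℝ, and suppose that the equation L⁰u = e^η·g is NOT locally solvable at the origin. Let L be the associated operator in the variables (z,s,t) and let h(z,s) := s + i·f(z). Then there is no pair (U, v) consisting of an open neighborhood U of the origin in ℂ × ℝ × ℝ and a C¹ function v : U → ℂ such that L applied to the function (z,s,t) ↦ h(z,s) + t·v(z,s,t) vanishes identically on U. -/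
lemma fderiv_w_aux (f : ℂ → ℝ) (v : ℂ × ℝ × ℝ → ℂ) (p : ℂ × ℝ × ℝ)
    (hf : DifferentiableAt ℝ f p.1) (hv : DifferentiableAt ℝ v p) (a : ℂ) (b c : ℝ) :
    fderiv ℝ (fun q : ℂ × ℝ × ℝ =>
      ((q.2.1 : ℂ) + Complex.I * (f q.1 : ℂ)) + (q.2.2 : ℂ) * v q) p (a, b, c)
      = (b : ℂ) + Complex.I * (fderiv ℝ f p.1 a : ℂ) + (c : ℂ) * v p
        + (p.2.2 : ℂ) * fderiv ℝ v p (a, b, c) := by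
  have h1 : HasFDerivAt (fun q : ℂ × ℝ × ℝ => (q.2.1 : ℂ))
      (Complex.ofRealCLM.comp ((ContinuousLinearMap.fst ℝ ℝ ℝ).comp
        (ContinuousLinearMap.snd ℝ ℂ (ℝ × ℝ)))) p :=
    (Complex.ofRealCLM.comp ((ContinuousLinearMap.fst ℝ ℝ ℝ).comp
        (ContinuousLinearMap.snd ℝ ℂ (ℝ × ℝ)))).hasFDerivAt
  have h2 : HasFDerivAt (fun q : ℂ × ℝ × ℝ => (q.2.2 : ℂ))
      (Complex.ofRealCLM.comp ((ContinuousLinearMap.snd ℝ ℝ ℝ).comp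
        (ContinuousLinearMap.snd ℝ ℂ (ℝ × ℝ)))) p :=
    (Complex.ofRealCLM.comp ((ContinuousLinearMap.snd ℝ ℝ ℝ).comp
        (ContinuousLinearMap.snd ℝ ℂ (ℝ × ℝ)))).hasFDerivAt
  have h3 : HasFDerivAt (fun q : ℂ × ℝ × ℝ => (f q.1 : ℂ))
      (Complex.ofRealCLM.comp ((fderiv ℝ f p.1).comp (ContinuousLinearMap.fst ℝ ℂ (ℝ × ℝ)))) p :=
    Complex.ofRealCLM.hasFDerivAt.comp p (hf.hasFDerivAt.comp p hasFDerivAt_fst)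
  have h := (h1.add (h3.const_mul Complex.I)).add (h2.mul hv.hasFDerivAt)
  have h' := h.fderiv
  erw [h']
  simp
  ring

lemma L0_exp_aux (f : ℂ → ℝ) (η u : ℂ × ℝ → ℂ) (p : ℂ × ℝ)
    (hη : DifferentiableAt ℝ η p) (hu : DifferentiableAt ℝ u p) :
    L0 f (fun q => -(Complex.exp (η q) * u q)) p
      = -(Complex.exp (η p) * (L0 f u p + L0 f η p * u p)) := by
  have h := ((hη.hasFDerivAt.cexp).mul hu.hasFDerivAt).neg
  have h' : fderiv ℝ (fun q => -(Complex.exp (η q) * u q)) p = _ := h.fderiv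
  simp only [L0, wirt, pds, h']
  simp
  ring

lemma fderiv_slice_aux (v : ℂ × ℝ × ℝ → ℂ) (p : ℂ × ℝ)
    (hv : DifferentiableAt ℝ v (p.1, p.2, 0)) (a : ℂ) (b : ℝ) :
    fderiv ℝ (fun q : ℂ × ℝ => v (q.1, q.2, 0)) p (a, b) = fderiv ℝ v (p.1, p.2, 0) (a, b, 0) := by
  have h1 : HasFDerivAt (fun q : ℂ × ℝ => ((q.1, q.2, 0) : ℂ × ℝ × ℝ))
      ((ContinuousLinearMap.fst ℝ ℂ ℝ).prod ((ContinuousLinearMap.snd ℝ ℂ ℝ).prod 0)) p :=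
    ((ContinuousLinearMap.fst ℝ ℂ ℝ).prod ((ContinuousLinearMap.snd ℝ ℂ ℝ).prod
      (0 : ℂ × ℝ →L[ℝ] ℝ))).hasFDerivAt
  have h2 : fderiv ℝ (fun q : ℂ × ℝ => v (q.1, q.2, 0)) p = _ :=
    (HasFDerivAt.comp p (g := v) hv.hasFDerivAt h1).fderiv
  rw [h2]
  simp

/-- The Claim of Section 3: if `L⁰u = e^η·g` is not locally solvable at the origin, then
the function `h(z,s) = s + i·f(z)` admits no CR extension: there is no `C¹` function `v`
on a neighborhood `U` of the origin of `ℂ × ℝ × ℝ` such that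
`L(h + t·v) = 0` on `U`. -/
theorem no_CR_extension (f : ℂ → ℝ) (hf : ContDiff ℝ 1 f)
    (g η : ℂ × ℝ → ℂ) (W : Set (ℂ × ℝ)) (hW : IsOpen W) (hW0 : ((0, 0) : ℂ × ℝ) ∈ W)
    (hg : ContinuousOn g W) (hη : ContDiffOn ℝ 1 η W)
    (hns : ¬ LocSolv f (fun p => Complex.exp (η p) * g p)) :
    ¬ ∃ (U : Set (ℂ × ℝ × ℝ)) (v : ℂ × ℝ × ℝ → ℂ),
        IsOpen U ∧ ((0, 0, 0) : ℂ × ℝ × ℝ) ∈ U ∧ ContDiffOn ℝ 1 v U ∧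
        ∀ p ∈ U, Lop f g η
          (fun q => ((q.2.1 : ℂ) + Complex.I * (f q.1 : ℂ)) + (q.2.2 : ℂ) * v q) p = 0 := by
  rintro ⟨U, v, hU, hU0, hv, hL⟩
  apply hns
  have hι : Continuous (fun q : ℂ × ℝ => ((q.1, q.2, 0) : ℂ × ℝ × ℝ)) := by fun_prop
  have hfd : ContinuousOn (fderiv ℝ v) U := hv.continuousOn_fderiv_of_isOpen hU le_rfl
  have hvd : ∀ q ∈ U, DifferentiableAt ℝ v q := fun q hq =>
    (hv.differentiableOn one_ne_zero).differentiableAt (hU.mem_nhds hq)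
  have hfdiff : Differentiable ℝ f := hf.differentiable one_ne_zero
  refine ⟨W ∩ (fun q : ℂ × ℝ => ((q.1, q.2, 0) : ℂ × ℝ × ℝ)) ⁻¹' U,
    hW.inter (hU.preimage hι), ⟨hW0, hU0⟩,
    fun q => -(Complex.exp (η q) * v (q.1, q.2, 0)), ?_, ?_⟩
  · have h1 : ContDiffOn ℝ 1 (fun q : ℂ × ℝ => v (q.1, q.2, 0))
        (W ∩ (fun q : ℂ × ℝ => ((q.1, q.2, 0) : ℂ × ℝ × ℝ)) ⁻¹' U) :=
      hv.comp (f := fun q : ℂ × ℝ => ((q.1, q.2, 0) : ℂ × ℝ × ℝ))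
        (by fun_prop) (fun q hq => hq.2)
    exact (((hη.mono Set.inter_subset_left).cexp).mul h1).neg
  · rintro ⟨z, s⟩ ⟨hpW, hpU⟩
    have hpU' : ((z, s, 0) : ℂ × ℝ × ℝ) ∈ U := hpU
    have hηd : DifferentiableAt ℝ η (z, s) :=
      (hη.differentiableOn one_ne_zero).differentiableAt (hW.mem_nhds hpW)
    have hv0 : DifferentiableAt ℝ (fun q : ℂ × ℝ => v (q.1, q.2, 0)) (z, s) := by
      have : DifferentiableAt ℝ (fun q : ℂ × ℝ => ((q.1, q.2, 0) : ℂ × ℝ × ℝ)) (z, s) := by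
        fun_prop
      exact DifferentiableAt.comp (g := v) (z, s) (hvd _ hpU') this
    rw [L0_exp_aux f η (fun q => v (q.1, q.2, 0)) (z, s) hηd hv0]
    -- the quotient by t
    let E : ℝ → ℂ := fun t =>
      (1 / 2 : ℂ) * (fderiv ℝ v (z, s, t) (1, 0, 0)
        + Complex.I * fderiv ℝ v (z, s, t) (Complex.I, 0, 0))
      - Complex.I * wirtf f z * fderiv ℝ v (z, s, t) (0, 1, 0)
      + (g (z, s) * (1 + (t : ℂ) * fderiv ℝ v (z, s, t) (0, 1, 0))
        + L0 f η (z, s) * (v (z, s, t) + (t : ℂ) * fderiv ℝ v (z, s, t) (0, 0, 1)))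
    have hc : Continuous (fun t : ℝ => ((z, s, t) : ℂ × ℝ × ℝ)) := by fun_prop
    have hcv : ContinuousAt (fun t : ℝ => v (z, s, t)) 0 :=
      ContinuousAt.comp (g := v) (hvd _ hpU').continuousAt hc.continuousAt
    have hcf : ContinuousAt (fun t : ℝ => fderiv ℝ v (z, s, t)) 0 :=
      ContinuousAt.comp (g := fderiv ℝ v) (hfd.continuousAt (hU.mem_nhds hpU')) hc.continuousAt
    have hcfa : ∀ x : ℂ × ℝ × ℝ, ContinuousAt (fun t : ℝ => fderiv ℝ v (z, s, t) x) 0 :=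
      fun x => hcf.clm_apply continuousAt_const
    have hct : ContinuousAt (fun t : ℝ => (t : ℂ)) 0 := Complex.continuous_ofReal.continuousAt
    have hE : ContinuousAt E 0 := by
      have e1 := hcfa (1, 0, 0)
      have e2 := hcfa (Complex.I, 0, 0)
      have e3 := hcfa (0, 1, 0)
      have e4 := hcfa (0, 0, 1)
      exact ((continuousAt_const.mul (e1.add (continuousAt_const.mul e2))).sub
        (continuousAt_const.mul e3)).add
        ((continuousAt_const.mul (continuousAt_const.add (hct.mul e3))).add
          (continuousAt_const.mul (hcv.add (hct.mul e4))))
    have hEz : ∀ᶠ t in nhdsWithin (0 : ℝ) {0}ᶜ, E t = 0 := by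
      have hm : ∀ᶠ t in nhds (0 : ℝ), ((z, s, t) : ℂ × ℝ × ℝ) ∈ U :=
        hc.continuousAt.eventually (hU.mem_nhds hpU')
      filter_upwards [nhdsWithin_le_nhds hm, self_mem_nhdsWithin] with t ht ht0
      have ht0' : (t : ℂ) ≠ 0 := Complex.ofReal_ne_zero.mpr ht0
      have h := hL _ ht
      simp only [Lop, wirt3, pds3, pdt3,
        fderiv_w_aux f v (z, s, t) (hfdiff z) (hvd _ ht)] at h
      have h2 : (t : ℂ) * E t = 0 := by
        rw [← h]
        simp only [E, wirtf]
        push_cast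
        simp
        ring
      exact (mul_eq_zero.mp h2).resolve_left ht0'
    have hE0 : E 0 = 0 := by
      have t1 : Filter.Tendsto E (nhdsWithin (0 : ℝ) {0}ᶜ) (nhds (E 0)) :=
        hE.tendsto.mono_left nhdsWithin_le_nhds
      have t2 : Filter.Tendsto E (nhdsWithin (0 : ℝ) {0}ᶜ) (nhds 0) :=
        (Filter.tendsto_congr' hEz).mpr tendsto_const_nhds
      exact tendsto_nhds_unique t1 t2
    have hfin : L0 f (fun q => v (q.1, q.2, 0)) (z, s) + L0 f η (z, s) * v (z, s, 0)
        = - g (z, s) := by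
      have : L0 f (fun q => v (q.1, q.2, 0)) (z, s) = 
        (1 / 2 : ℂ) * (fderiv ℝ v (z, s, 0) (1, 0, 0)
          + Complex.I * fderiv ℝ v (z, s, 0) (Complex.I, 0, 0))
        - Complex.I * wirtf f z * fderiv ℝ v (z, s, 0) (0, 1, 0) := by
        simp only [L0, wirt, pds, fderiv_slice_aux v (z, s) (hvd _ hpU')]
      rw [this]
      simp only [E, Complex.ofReal_zero, zero_mul, add_zero, mul_one] at hE0
      linear_combination hE0
    simp only [hfin]
    ring
end

section
/- (Proposition: non-extension example, existential form.) There exist a smooth function C : ℂ × ℝ × ℝ → ℂ, a real analytic function D : ℂ × ℝ × ℝ → ℂ, and a real analytic function h : ℂ × ℝ → ℂ with the following properties. Define the operator L on real-differentiable functions w of (z,s,t) ∈ ℂ × ℝ × ℝ by (Lw)(z,s,t) = ∂̄w(z,s,t) + C(z,s,t)·(∂w/∂s)(z,s,t) + t·D(z,s,t)·(∂w/∂t)(z,s,t), and define L⁰ on real-differentiable functions u of (z,s) by (L⁰u)(z,s) = ∂̄u(z,s) + C(z,s,0)·(∂u/∂s)(z,s). Then L⁰h = 0 on a neighborhood of the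 origin of ℂ × ℝ, yet there is no pair (U, v) consisting of an open neighborhood U of the origin in ℂ × ℝ × ℝ and a C¹ function v : U → ℂ such that L applied to the function (z,s,t) ↦ h(z,s) + t·v(z,s,t) vanishes identically on U. -/
/-- The operator `Lw = ∂̄w + C·∂w/∂s + t·D·∂w/∂t` on functions of `(z,s,t)`. -/
noncomputable def Lgen (C D : ℂ × ℝ × ℝ → ℂ) (w : ℂ × ℝ × ℝ → ℂ) (p : ℂ × ℝ × ℝ) : ℂ :=
  wirt3 w p + C p * pds3 w p + (p.2.2 : ℂ) * D p * pdt3 w p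

/-- The operator `L⁰u = ∂̄u + C(z,s,0)·∂u/∂s` on functions of `(z,s)`. -/
noncomputable def L0gen (C : ℂ × ℝ × ℝ → ℂ) (u : ℂ × ℝ → ℂ) (p : ℂ × ℝ) : ℂ :=
  wirt u p + C (p.1, p.2, 0) * pds u p


open Complex Set Filter Topology MeasureTheory

lemma bdry_zero (V : ℂ → ℂ) (hV : Continuous V) (δ : ℝ) (hδ : 0 < δ)
    (hd : DifferentiableOn ℂ V (Ioo (-δ) δ ×ℂ Ioo 0 δ))
    (h0 : ∀ s : ℝ, -δ < s → s < 0 → V s = 0) :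
    ∀ s : ℝ, -δ < s → s < δ → V s = 0 := by
  have hopen : IsOpen (Ioo (-δ) δ ×ℂ Ioo 0 δ) := isOpen_Ioo.reProdIm isOpen_Ioo
  have key : ∀ c : ℂ, -δ < c.re - c.im → c.re + c.im < 0 → 0 < c.im → 2 * c.im < δ → V c = 0 := by
    intro c h1 h2 h3 h4
    set Q : Set ℂ := Ioo (c.re - c.im) (c.re + c.im) ×ℂ Ioo 0 (2 * c.im) with hQ
    set g : ℂ → ℂ := fun ζ => V ζ * V (c + I * (ζ - c)) * V (c - (ζ - c)) * V (c - I * (ζ - c))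
      with hg
    have hVd : ∀ z : ℂ, -δ < z.re → z.re < δ → 0 < z.im → z.im < δ → DifferentiableAt ℂ V z :=
      fun z a b e f => hd.differentiableAt (hopen.mem_nhds ⟨⟨a, b⟩, ⟨e, f⟩⟩)
    have hgd : DiffContOnCl ℂ g Q := by
      constructor
      · rintro z ⟨⟨a1, a2⟩, ⟨a3, a4⟩⟩
        refine DifferentiableAt.differentiableWithinAt ?_
        have e1 : DifferentiableAt ℂ V z := by apply hVd <;> linarith
        have e2 : DifferentiableAt ℂ V (c + I * (z - c)) := by
          apply hVd <;> simp <;> linarith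
        have e3 : DifferentiableAt ℂ V (c - (z - c)) := by
          apply hVd <;> simp <;> linarith
        have e4 : DifferentiableAt ℂ V (c - I * (z - c)) := by
          apply hVd <;> simp <;> linarith
        refine DifferentiableAt.mul (DifferentiableAt.mul (DifferentiableAt.mul e1 ?_) ?_) ?_
        · exact DifferentiableAt.comp z (f := fun ζ => c + I * (ζ - c)) e2 (by fun_prop)
        · exact DifferentiableAt.comp z (f := fun ζ => c - (ζ - c)) e3 (by fun_prop)
        · exact DifferentiableAt.comp z (f := fun ζ => c - I * (ζ - c)) e4 (by fun_prop)
      · exact (by fun_prop : Continuous g).continuousOn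
    have hreal : ∀ z : ℂ, z.im = 0 → -δ < z.re → z.re < 0 → V z = 0 := by
      intro z a b e
      have : z = ((z.re : ℝ) : ℂ) := by apply Complex.ext <;> simp [a]
      rw [this]; exact h0 _ b e
    have hfr : ∀ z ∈ frontier Q, ‖g z‖ ≤ 0 := by
      intro z hz
      rw [hQ, frontier_reProdIm, closure_Ioo (by linarith), closure_Ioo (by linarith),
        frontier_Ioo (by linarith), frontier_Ioo (by linarith)] at hz
      have : g z = 0 := by
        simp only [hg, mul_eq_zero]
        rcases hz with ⟨⟨a1, a2⟩, a3⟩ | ⟨a3, ⟨a1, a2⟩⟩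
        · rcases a3 with a3 | a3
          · left; left; left; apply hreal _ a3 <;> linarith
          · have a3 : z.im = 2 * c.im := a3
            left; right; apply hreal <;> simp <;> linarith
        · rcases a3 with a3 | a3
          · have a3 : z.re = _ := a3
            left; left; right; apply hreal <;> simp <;> linarith
          · have a3 : z.re = _ := a3
            right; apply hreal <;> simp <;> linarith
      simp [this]
    have hb : Bornology.IsBounded Q := (Metric.isBounded_Ioo _ _).reProdIm (Metric.isBounded_Ioo _ _)
    have hc : c ∈ closure Q := subset_closure ⟨⟨by linarith, by linarith⟩, ⟨by linarith, by linarith⟩⟩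
    have := norm_le_of_forall_mem_frontier_norm_le hb hgd hfr hc
    simpa [hg] using norm_le_zero_iff.1 this
  have han : AnalyticOnNhd ℂ V (Ioo (-δ) δ ×ℂ Ioo 0 δ) := hd.analyticOnNhd hopen
  have hconv : Convex ℝ (Ioo (-δ) δ ×ℂ Ioo 0 δ) := 
    ((convex_Ioo (-δ) δ).linear_preimage reLm).inter ((convex_Ioo 0 δ).linear_preimage imLm)
  have hz0 : (⟨-δ/2, δ/8⟩ : ℂ) ∈ (Ioo (-δ) δ ×ℂ Ioo 0 δ) :=
    ⟨⟨by simp; linarith, by simp; linarith⟩, ⟨by simp; linarith, by simp; linarith⟩⟩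
  have hev : V =ᶠ[𝓝 (⟨-δ/2, δ/8⟩ : ℂ)] 0 := by
    have : Ioo (-δ/2 - δ/8) (-δ/2+δ/8) ×ℂ Ioo 0 (δ/4) ∈ 𝓝 (⟨-δ/2, δ/8⟩ : ℂ) :=
      (isOpen_Ioo.reProdIm isOpen_Ioo).mem_nhds
        ⟨⟨by simp; linarith, by simp; linarith⟩, ⟨by simp; linarith, by simp; linarith⟩⟩
    filter_upwards [this]
    rintro c ⟨⟨a1, a2⟩, ⟨a3, a4⟩⟩
    apply key <;> linarith
  have hzero := han.eqOn_zero_of_preconnected_of_eventuallyEq_zero hconv.isPreconnected hz0 hev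
  intro s hs1 hs2
  have hcl : EqOn V 0 (closure (Ioo (-δ) δ ×ℂ Ioo 0 δ)) :=
    hzero.closure hV continuous_zero
  apply hcl
  rw [closure_reProdIm, closure_Ioo (by linarith), closure_Ioo (by linarith)]
  exact ⟨⟨by simp; linarith, by simp; linarith⟩, ⟨by simp, by simp; linarith⟩⟩

lemma param_deriv (k : (ℝ × ℝ) × ℝ → ℂ) (hk : ContDiff ℝ 1 k) (a b : ℝ) (p : ℝ × ℝ) :
    HasFDerivAt (fun p => ∫ t in a..b, k (p, t))
      (∫ t in a..b, (fderiv ℝ k (p, t)).comp (ContinuousLinearMap.inl ℝ (ℝ × ℝ) ℝ)) p := by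
  have hc : Continuous (fun q : (ℝ × ℝ) × ℝ =>
      (fderiv ℝ k q).comp (ContinuousLinearMap.inl ℝ (ℝ × ℝ) ℝ)) :=
    (hk.continuous_fderiv one_ne_zero).clm_comp continuous_const
  have hkc := hk.continuous
  obtain ⟨M, hM⟩ := ((isCompact_closedBall p 1).prod (isCompact_uIcc (a := a) (b := b))).exists_bound_of_continuousOn
    hc.continuousOn
  refine intervalIntegral.hasFDerivAt_integral_of_dominated_of_fderiv_le
    (F' := fun p t => (fderiv ℝ k (p, t)).comp (ContinuousLinearMap.inl ℝ (ℝ × ℝ) ℝ))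
    (bound := fun _ => M) (Metric.closedBall_mem_nhds p one_pos) ?_ ?_ ?_ ?_ ?_ ?_
  · exact Eventually.of_forall fun x => (by fun_prop : Continuous fun t => k (x, t)).aestronglyMeasurable
  · exact (by fun_prop : Continuous fun t => k (p, t)).intervalIntegrable _ _
  · exact (hc.comp (by fun_prop : Continuous fun t : ℝ => (p, t))).aestronglyMeasurable
  · refine Eventually.of_forall fun t ht x hx => hM (x, t) ⟨hx, uIoc_subset_uIcc ht⟩
  · exact continuous_const.intervalIntegrable _ _
  · refine Eventually.of_forall fun t ht x hx => ?_
    have h1 : HasFDerivAt k (fderiv ℝ k (x, t)) (x, t) := (hk.differentiable one_ne_zero _).hasFDerivAt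
    exact h1.comp x (hasFDerivAt_prodMk_left x t)

noncomputable def lewyK (u : ℂ × ℝ → ℂ) (q : (ℝ × ℝ) × ℝ) : ℂ :=
  u ((q.1.1 : ℂ) * exp ((q.2 : ℂ) * I), q.1.2) * (I * ((q.1.1 : ℂ) * exp ((q.2 : ℂ) * I)))

lemma lewyK_contDiff (u : ℂ × ℝ → ℂ) (hu : ContDiff ℝ 1 u) : ContDiff ℝ 1 (lewyK u) := by
  have h1 : ContDiff ℝ 1 (fun q : (ℝ × ℝ) × ℝ => ((q.1.1 : ℂ) * exp ((q.2 : ℂ) * I))) := by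
    have e1 : ContDiff ℝ 1 (fun q : (ℝ × ℝ) × ℝ => (q.1.1 : ℂ)) := ofRealCLM.contDiff.comp (by fun_prop)
    have e2 : ContDiff ℝ 1 (fun q : (ℝ × ℝ) × ℝ => (q.2 : ℂ)) := ofRealCLM.contDiff.comp (by fun_prop)
    exact e1.mul ((e2.mul contDiff_const).cexp)
  have h2 : ContDiff ℝ 1 (fun q : (ℝ × ℝ) × ℝ => q.1.2) := by fun_prop
  exact (hu.comp (h1.prodMk h2)).mul (contDiff_const.mul h1)

lemma lin_z (A : ℂ × ℝ →L[ℝ] ℂ) (z : ℂ) : A (z, 0) = z.re * A (1, 0) + z.im * A (I, 0) := by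
  have : ((z, 0) : ℂ × ℝ) = z.re • (1, 0) + z.im • (I, 0) := by
    ext <;> simp
  rw [this, map_add, map_smul, map_smul]; simp

lemma lewyK_s (u : ℂ × ℝ → ℂ) (hu : ContDiff ℝ 1 u) (r s t : ℝ) :
    fderiv ℝ (lewyK u) ((r, s), t) ((0, 1), 0) =
      pds u (r * exp (t * I), s) * (I * (r * exp (t * I))) := by
  have h0 : HasDerivAt (fun x : ℝ => (((r, x), t) : (ℝ × ℝ) × ℝ)) ((0, 1), 0) s :=
    ((hasDerivAt_const s r).prodMk (hasDerivAt_id s)).prodMk (hasDerivAt_const s t)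
  have h1 := (((lewyK_contDiff u hu).differentiable one_ne_zero ((r, s), t)).hasFDerivAt).comp_hasDerivAt s h0
  have h2 : HasDerivAt (fun x : ℝ => ((r * exp (t * I), x) : ℂ × ℝ)) (0, 1) s :=
    (hasDerivAt_const s _).prodMk (hasDerivAt_id s)
  have h3 := ((hu.differentiable one_ne_zero (r * exp (t * I), s)).hasFDerivAt).comp_hasDerivAt s h2
  exact h1.unique (h3.mul_const (I * (r * exp (t * I))))

lemma lewyK_r (u : ℂ × ℝ → ℂ) (hu : ContDiff ℝ 1 u) (r s t : ℝ) :
    fderiv ℝ (lewyK u) ((r, s), t) ((1, 0), 0) =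
      fderiv ℝ u (r * exp (t * I), s) (exp (t * I), 0) * (I * (r * exp (t * I)))
      + u (r * exp (t * I), s) * (I * exp (t * I)) := by
  have h0 : HasDerivAt (fun x : ℝ => (((x, s), t) : (ℝ × ℝ) × ℝ)) ((1, 0), 0) r :=
    ((hasDerivAt_id r).prodMk (hasDerivAt_const r s)).prodMk (hasDerivAt_const r t)
  have h1 := (((lewyK_contDiff u hu).differentiable one_ne_zero ((r, s), t)).hasFDerivAt).comp_hasDerivAt r h0
  have h4 : HasDerivAt (fun x : ℝ => (x : ℂ) * exp (t * I)) (exp (t * I)) r := by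
    simpa using (hasDerivAt_id r).ofReal_comp.mul_const (exp (t * I))
  have h2 : HasDerivAt (fun x : ℝ => ((x * exp (t * I), s) : ℂ × ℝ)) (exp (t * I), 0) r :=
    h4.prodMk (hasDerivAt_const r s)
  have h3 := ((hu.differentiable one_ne_zero (r * exp (t * I), s)).hasFDerivAt).comp_hasDerivAt r h2
  exact h1.unique (h3.mul (h4.const_mul I))

lemma lewy_P (u : ℂ × ℝ → ℂ) (hu : ContDiff ℝ 1 u) (r s t : ℝ) :
    HasDerivAt (fun t : ℝ => u (r * exp (t * I), s) * exp (t * I))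
      (fderiv ℝ (lewyK u) ((r, s), t) ((1, 0), 0) - 2 * I * r * wirt u (r * exp (t * I), s)) t := by
  have h4 : HasDerivAt (fun x : ℝ => exp (x * I)) (exp (t * I) * I) t := by
    simpa using ((hasDerivAt_id t).ofReal_comp.mul_const I).cexp
  have h2 : HasDerivAt (fun x : ℝ => ((r * exp (x * I), s) : ℂ × ℝ)) (r * (exp (t * I) * I), 0) t :=
    (h4.const_mul (r : ℂ)).prodMk (hasDerivAt_const t s)
  have h3 := ((hu.differentiable one_ne_zero (r * exp (t * I), s)).hasFDerivAt).comp_hasDerivAt t h2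
  refine (h3.mul h4).congr_deriv ?_
  rw [lewyK_r u hu, wirt, lin_z _ (exp (t * I)), lin_z _ (r * (exp (t * I) * I))]
  have hI : I ^ 2 = -1 := I_sq
  have e : exp (t * I) = (Real.cos t : ℂ) + Real.sin t * I := by
    rw [exp_mul_I]; simp
  have er : (exp (t * I)).re = Real.cos t := exp_ofReal_mul_I_re t
  have ei : (exp (t * I)).im = Real.sin t := exp_ofReal_mul_I_im t
  have hcs : (Real.cos t : ℂ) ^ 2 = 1 - (Real.sin t : ℂ) ^ 2 := by
    have := Real.cos_sq' t
    exact_mod_cast this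
  have er2 : ((r : ℂ) * (exp (t * I) * I)).re = - (r * Real.sin t) := by simp [ei]
  have ei2 : ((r : ℂ) * (exp (t * I) * I)).im = r * Real.cos t := by simp [er]
  simp only [er, ei, er2, ei2, Function.comp]
  generalize u _ = U
  generalize fderiv ℝ u _ (1, 0) = A
  generalize fderiv ℝ u _ (I, 0) = B
  rw [e]
  push_cast at hcs ⊢
  generalize Complex.sin t = S at *
  generalize Complex.cos t = Co at *
  linear_combination (-S * Co * r * A + r * B * (1 - S ^ 2)) * hI + (-I * r * A + r * B) * hcs

lemma lewy_int (u : ℂ × ℝ → ℂ) (hu : ContDiff ℝ 1 u) (r s : ℝ) (f : ℂ)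
    (heq : ∀ t : ℝ, wirt u (r * exp (t * I), s) - I * (r * exp (t * I)) * pds u (r * exp (t * I), s) = f) :
    (∫ t in (0:ℝ)..(2 * Real.pi), fderiv ℝ (lewyK u) ((r, s), t) ((1, 0), 0)) =
    2 * I * r * ((∫ t in (0:ℝ)..(2 * Real.pi), fderiv ℝ (lewyK u) ((r, s), t) ((0, 1), 0))
      + 2 * Real.pi * f) := by
  have hw : ∀ t : ℝ, wirt u (r * exp (t * I), s) = fderiv ℝ (lewyK u) ((r, s), t) ((0, 1), 0) + f := by
    intro t
    rw [lewyK_s u hu, ← heq t]; ring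
  have hc : ∀ x : (ℝ × ℝ) × ℝ, Continuous (fun t : ℝ => fderiv ℝ (lewyK u) ((r, s), t) x) := by
    intro x
    have := (lewyK_contDiff u hu).continuous_fderiv one_ne_zero
    have h2 := this.comp (by fun_prop : Continuous fun t : ℝ => (((r, s), t) : (ℝ × ℝ) × ℝ))
    exact h2.clm_apply continuous_const
  have h1 := hc ((1, 0), 0)
  have h2 := hc ((0, 1), 0)
  have hI := intervalIntegral.integral_eq_sub_of_hasDerivAt (a := 0) (b := 2 * Real.pi)
    (fun t _ => lewy_P u hu r s t)
    (by
      simp only [hw]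
      exact (by fun_prop : Continuous _).intervalIntegrable _ _)
  simp only [hw] at hI
  rw [intervalIntegral.integral_sub (h1.intervalIntegrable _ _)
    ((by fun_prop : Continuous _).intervalIntegrable _ _), intervalIntegral.integral_const_mul,
    intervalIntegral.integral_add (h2.intervalIntegrable _ _) (by simp)] at hI
  have e1 : exp (((2 * Real.pi : ℝ) : ℂ) * I) = 1 := by push_cast; exact exp_two_pi_mul_I
  rw [e1] at hI
  simp only [ofReal_zero, zero_mul, exp_zero, sub_self, intervalIntegral.integral_const, sub_zero] at hI
  rw [sub_eq_zero] at hI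
  rw [hI]; simp

lemma complex_diff {V : ℂ → ℂ} {V' : ℂ →L[ℝ] ℂ} {w : ℂ} (h : HasFDerivAt V V' w)
    (hI : V' I = I * V' 1) : DifferentiableAt ℂ V w := by
  refine differentiableAt_complex_iff_differentiableAt_real.2 ⟨h.differentiableAt, ?_⟩
  rw [h.fderiv, hI, smul_eq_mul]

lemma lewy_no (u : ℂ × ℝ → ℂ) (hu : ContDiff ℝ 1 u)
    (heq : ∀ᶠ p in 𝓝 (0 : ℂ × ℝ), wirt u p - I * p.1 * pds u p = (deriv expNegInvGlue p.2 : ℝ)) :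
    False := by
  obtain ⟨ρ, hρ, hball⟩ := Metric.eventually_nhds_iff.1 heq
  set H : ℝ × ℝ → ℂ := fun p => ∫ t in (0:ℝ)..(2 * Real.pi), lewyK u (p, t) with hH
  set H' : ℝ × ℝ → (ℝ × ℝ →L[ℝ] ℂ) := fun p => ∫ t in (0:ℝ)..(2 * Real.pi),
    (fderiv ℝ (lewyK u) (p, t)).comp (ContinuousLinearMap.inl ℝ (ℝ × ℝ) ℝ) with hH'
  have hHd : ∀ p, HasFDerivAt H (H' p) p := fun p => param_deriv _ (lewyK_contDiff u hu) _ _ p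
  have hHc : Continuous H := continuous_iff_continuousAt.2 fun p => (hHd p).continuousAt
  have hHapp : ∀ p x, H' p x = ∫ t in (0:ℝ)..(2 * Real.pi), fderiv ℝ (lewyK u) (p, t) (x, 0) := by
    intro p x
    have hc : Continuous (fun t : ℝ =>
        (fderiv ℝ (lewyK u) (p, t)).comp (ContinuousLinearMap.inl ℝ (ℝ × ℝ) ℝ)) :=
      (((lewyK_contDiff u hu).continuous_fderiv one_ne_zero).comp
        (by fun_prop : Continuous fun t : ℝ => (p, t))).clm_comp continuous_const
    simp only [hH']
    rw [ContinuousLinearMap.intervalIntegral_apply (hc.intervalIntegrable _ _)]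
    simp
  set V : ℂ → ℂ := fun w => H (√w.im, w.re) + 2 * Real.pi * (expNegInvGlue w.re : ℝ) with hV
  have hglue : ContDiff ℝ 1 expNegInvGlue := expNegInvGlue.contDiff (n := 1)
  have hVc : Continuous V := by
    have := hglue.continuous
    have h2 : Continuous fun w : ℂ => (√w.im, w.re) := by fun_prop
    simp only [hV]
    fun_prop
  have hVr : ∀ s : ℝ, V s = 2 * Real.pi * (expNegInvGlue s : ℝ) := by
    intro s
    simp [hV, hH, lewyK]
  set δ := min ρ (ρ ^ 2) with hδ
  have hδ0 : 0 < δ := by positivity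
  have hd : DifferentiableOn ℂ V (Ioo (-δ) δ ×ℂ Ioo 0 δ) := by
    rintro w ⟨⟨a1, a2⟩, ⟨a3, a4⟩⟩
    refine DifferentiableAt.differentiableWithinAt ?_
    have a3 : 0 < w.im := a3
    have a4 : w.im < δ := a4
    have a1 : -δ < w.re := a1
    have a2 : w.re < δ := a2
    have hsq : 0 < √w.im := Real.sqrt_pos.2 a3
    have hsqlt : √w.im < ρ := by
      rw [Real.sqrt_lt' hρ]; exact a4.trans_le (min_le_right _ _)
    have hint := lewy_int u hu (√w.im) w.re (deriv expNegInvGlue w.re : ℝ) (by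
      intro t
      refine hball (y := ((√w.im : ℝ) * exp (t * I), w.re)) ?_
      rw [dist_zero_right, Prod.norm_def]
      apply max_lt
      · simp [norm_exp_ofReal_mul_I, abs_of_pos hsq, hsqlt]
      · rw [Real.norm_eq_abs]
        exact (abs_lt.2 ⟨a1, a2⟩).trans_le (min_le_left _ _))
    rw [← hHapp, ← hHapp] at hint
    have g1 : HasFDerivAt (fun w : ℂ => (√w.im, w.re))
        (((1 / (2 * √w.im)) • imCLM).prod reCLM) w :=
      ((Real.hasDerivAt_sqrt a3.ne').comp_hasFDerivAt w imCLM.hasFDerivAt).prodMk reCLM.hasFDerivAt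
    have g2 := (hHd (√w.im, w.re)).comp w g1
    have g3 : HasFDerivAt (fun w : ℂ => expNegInvGlue w.re)
        (deriv expNegInvGlue w.re • reCLM) w :=
      ((hglue.differentiable one_ne_zero _).hasDerivAt).comp_hasFDerivAt w reCLM.hasFDerivAt
    have g4 := (ofRealCLM.hasFDerivAt.comp w g3).const_mul (2 * Real.pi : ℂ)
    refine complex_diff (g2.add g4) ?_
    have e1 : H' (√w.im, w.re) (1 / (2 * √w.im), 0) = (1 / (2 * √w.im) : ℝ) * H' (√w.im, w.re) (1, 0) := by
      have : ((1 / (2 * √w.im), 0) : ℝ × ℝ) = (1 / (2 * √w.im)) • (1, 0) := by simp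
      rw [this, map_smul, real_smul]
    have hne : ((√w.im : ℝ) : ℂ) ≠ 0 := by exact_mod_cast hsq.ne'
    have e2 : H' (√w.im, w.re) (1 / (2 * √w.im), 0) =
        I * (H' (√w.im, w.re) (0, 1) + 2 * Real.pi * (deriv expNegInvGlue w.re : ℝ)) := by
      rw [e1, hint]; push_cast; field_simp
    simp only [_root_.add_apply, ContinuousLinearMap.comp_apply,
      ContinuousLinearMap.prod_apply, _root_.smul_apply, imCLM_apply, reCLM_apply,
      I_im, I_re, one_im, one_re, smul_eq_mul, mul_one, mul_zero, ofRealCLM_apply, ofReal_zero,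
      add_zero]
    exact e2
  have hz := bdry_zero V hVc δ hδ0 hd (by
    intro s _ hs
    rw [hVr, expNegInvGlue.zero_of_nonpos hs.le]; simp) (δ / 2) (by linarith) (by linarith)
  rw [hVr] at hz
  have := expNegInvGlue.pos_of_pos (half_pos hδ0)
  have h3 : expNegInvGlue (δ / 2) ≠ 0 := this.ne'
  simp [Real.pi_ne_zero, -expNegInvGlue.zero_iff_nonpos, h3] at hz

lemma cutoff_ext (U : Set (ℂ × ℝ × ℝ)) (v : ℂ × ℝ × ℝ → ℂ) (hU : IsOpen U) (h0 : (0 : ℂ × ℝ × ℝ) ∈ U)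
    (hv : ContDiffOn ℝ 1 v U) :
    ∃ v' : ℂ × ℝ × ℝ → ℂ, ContDiff ℝ 1 v' ∧ v' =ᶠ[𝓝 0] v := by
  obtain ⟨ε, hε, hsub⟩ := Metric.nhds_basis_closedBall.mem_iff.1 (hU.mem_nhds h0)
  let χ : ContDiffBump (0 : ℂ × ℝ × ℝ) := ⟨ε / 2, ε, by positivity, by linarith⟩
  refine ⟨fun p => χ p • v p, ?_, ?_⟩
  · rw [contDiff_iff_contDiffAt]
    intro x
    by_cases hx' : x ∈ tsupport χ
    swap
    · have h1 := notMem_tsupport_iff_eventuallyEq.1 hx'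
      have h2 : (fun p => χ p • v p) =ᶠ[𝓝 x] fun _ => (0 : ℂ) := by
        filter_upwards [h1] with p hp
        simp [hp]
      exact contDiffAt_const.congr_of_eventuallyEq h2
    rw [χ.tsupport_eq] at hx'
    exact χ.contDiff.contDiffAt.smul (hv.contDiffAt (hU.mem_nhds (hsub hx')))
  · filter_upwards [χ.eventuallyEq_one] with p hp
    simp [hp]

lemma hder (z : ℂ) (s t : ℝ) (v : ℂ × ℝ × ℝ → ℂ) (hv : DifferentiableAt ℝ v (z, s, t)) (x : ℂ × ℝ × ℝ) :
    fderiv ℝ (fun q : ℂ × ℝ × ℝ => ((q.2.1 : ℂ) + I * (q.1 * (starRingEnd ℂ) q.1)) + (q.2.2 : ℂ) * v q)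
      (z, s, t) x = (x.2.1 + I * (z * (starRingEnd ℂ) x.1 + x.1 * (starRingEnd ℂ) z)) +
        (t * fderiv ℝ v (z, s, t) x + x.2.2 * v (z, s, t)) := by
  have h1 : HasFDerivAt (fun q : ℂ × ℝ × ℝ => q.1) (ContinuousLinearMap.fst ℝ ℂ (ℝ × ℝ)) (z, s, t) :=
    hasFDerivAt_fst
  have h2 : HasFDerivAt (fun q : ℂ × ℝ × ℝ => (q.2.1 : ℂ)) (ofRealCLM.comp
    ((ContinuousLinearMap.fst ℝ ℝ ℝ).comp (ContinuousLinearMap.snd ℝ ℂ (ℝ × ℝ)))) (z, s, t) :=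
    (ofRealCLM.comp ((ContinuousLinearMap.fst ℝ ℝ ℝ).comp
      (ContinuousLinearMap.snd ℝ ℂ (ℝ × ℝ)))).hasFDerivAt
  have h3 : HasFDerivAt (fun q : ℂ × ℝ × ℝ => (q.2.2 : ℂ)) (ofRealCLM.comp
    ((ContinuousLinearMap.snd ℝ ℝ ℝ).comp (ContinuousLinearMap.snd ℝ ℂ (ℝ × ℝ)))) (z, s, t) :=
    (ofRealCLM.comp ((ContinuousLinearMap.snd ℝ ℝ ℝ).comp
      (ContinuousLinearMap.snd ℝ ℂ (ℝ × ℝ)))).hasFDerivAt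
  have h4 : HasFDerivAt (fun q : ℂ × ℝ × ℝ => (starRingEnd ℂ) q.1)
      ((conjCLE : ℂ →L[ℝ] ℂ).comp (ContinuousLinearMap.fst ℝ ℂ (ℝ × ℝ))) (z, s, t) :=
    ((conjCLE : ℂ →L[ℝ] ℂ).comp (ContinuousLinearMap.fst ℝ ℂ (ℝ × ℝ))).hasFDerivAt
  have := (h2.add ((h1.mul h4).const_mul I)).add (h3.mul hv.hasFDerivAt)
  have e := congrArg (fun A : ℂ × ℝ × ℝ →L[ℝ] ℂ => A x) this.fderiv
  refine Eq.trans e ?_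
  simp
  ring

lemma hder0 (z : ℂ) (s : ℝ) (x : ℂ × ℝ) :
    fderiv ℝ (fun q : ℂ × ℝ => ((q.2 : ℂ) + I * (q.1 * (starRingEnd ℂ) q.1)))
      (z, s) x = (x.2 + I * (z * (starRingEnd ℂ) x.1 + x.1 * (starRingEnd ℂ) z)) := by
  have h1 : HasFDerivAt (fun q : ℂ × ℝ => q.1) (ContinuousLinearMap.fst ℝ ℂ ℝ) (z, s) :=
    hasFDerivAt_fst
  have h2 : HasFDerivAt (fun q : ℂ × ℝ => (q.2 : ℂ)) (ofRealCLM.comp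
    (ContinuousLinearMap.snd ℝ ℂ ℝ)) (z, s) :=
    (ofRealCLM.comp (ContinuousLinearMap.snd ℝ ℂ ℝ)).hasFDerivAt
  have h4 : HasFDerivAt (fun q : ℂ × ℝ => (starRingEnd ℂ) q.1)
      ((conjCLE : ℂ →L[ℝ] ℂ).comp (ContinuousLinearMap.fst ℝ ℂ ℝ)) (z, s) :=
    ((conjCLE : ℂ →L[ℝ] ℂ).comp (ContinuousLinearMap.fst ℝ ℂ ℝ)).hasFDerivAt
  have := (h2.add ((h1.mul h4).const_mul I))
  have e := congrArg (fun A : ℂ × ℝ →L[ℝ] ℂ => A x) this.fderiv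
  refine Eq.trans e ?_
  simp
  ring

/-- Non-extension example: there exist a smooth coefficient `C`, a real analytic
coefficient `D` and a real analytic function `h` such that `L⁰h = 0` near the origin of
`ℂ × ℝ`, yet there is no `C¹` function `v` on any neighborhood `U` of the origin of
`ℂ × ℝ × ℝ` with `L(h + t·v) = 0` on `U`. -/
theorem exists_non_extendable :
    ∃ (C D : ℂ × ℝ × ℝ → ℂ) (h : ℂ × ℝ → ℂ),
      ContDiff ℝ (⊤ : ℕ∞) C ∧ (∀ p, AnalyticAt ℝ D p) ∧ (∀ p, AnalyticAt ℝ h p) ∧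
      (∃ V : Set (ℂ × ℝ), IsOpen V ∧ ((0, 0) : ℂ × ℝ) ∈ V ∧ ∀ p ∈ V, L0gen C h p = 0) ∧
      ¬ ∃ (U : Set (ℂ × ℝ × ℝ)) (v : ℂ × ℝ × ℝ → ℂ),
          IsOpen U ∧ ((0, 0, 0) : ℂ × ℝ × ℝ) ∈ U ∧ ContDiffOn ℝ 1 v U ∧
          ∀ p ∈ U, Lgen C D (fun q => h (q.1, q.2.1) + (q.2.2 : ℂ) * v q) p = 0 := by
  refine ⟨fun p => -I * p.1 - (p.2.2 : ℂ) * (deriv expNegInvGlue p.2.1 : ℝ), fun _ => 0,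
    fun q => (q.2 : ℂ) + I * (q.1 * (starRingEnd ℂ) q.1), ?_, ?_, ?_, ?_, ?_⟩
  · have h1 : ContDiff ℝ (⊤ : ℕ∞) (deriv expNegInvGlue) :=
      ((contDiff_infty_iff_deriv (f := expNegInvGlue)).1 expNegInvGlue.contDiff).2
    have h2 : ContDiff ℝ (⊤ : ℕ∞) (fun p : ℂ × ℝ × ℝ => ((deriv expNegInvGlue p.2.1 : ℝ) : ℂ)) :=
      ofRealCLM.contDiff.comp (h1.comp (by fun_prop))
    have h3 : ContDiff ℝ (⊤ : ℕ∞) (fun p : ℂ × ℝ × ℝ => (p.2.2 : ℂ)) :=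
      ofRealCLM.contDiff.comp (by fun_prop)
    exact (contDiff_const.mul contDiff_fst).sub (h3.mul h2)
  · intro p; exact analyticAt_const
  · intro p
    have h1 : AnalyticAt ℝ (fun q : ℂ × ℝ => (q.2 : ℂ)) p :=
      (ofRealCLM.comp (ContinuousLinearMap.snd ℝ ℂ ℝ)).analyticAt p
    have h2 : AnalyticAt ℝ (fun q : ℂ × ℝ => (starRingEnd ℂ) q.1) p :=
      ((conjCLE : ℂ →L[ℝ] ℂ).comp (ContinuousLinearMap.fst ℝ ℂ ℝ)).analyticAt p
    exact h1.add (analyticAt_const.mul (analyticAt_fst.mul h2))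
  · refine ⟨univ, isOpen_univ, mem_univ _, ?_⟩
    rintro ⟨z, s⟩ -
    simp only [L0gen, wirt, pds, hder0]
    simp
    linear_combination (I * (starRingEnd ℂ) z / 2 - I * z / 2) * I_sq
  · rintro ⟨U, v, hU, h0, hv, hL⟩
    obtain ⟨v', hv', hvv⟩ := cutoff_ext U v hU h0 hv
    have hE : ∀ᶠ p in 𝓝 (0 : ℂ × ℝ × ℝ), p.2.2 ≠ 0 → wirt3 v' p - I * p.1 * pds3 v' p
        - (deriv expNegInvGlue p.2.1 : ℝ) - (p.2.2 : ℂ) * (deriv expNegInvGlue p.2.1 : ℝ) * pds3 v' p = 0 := by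
      filter_upwards [hU.mem_nhds h0, eventually_eventually_nhds.2 hvv]
      rintro ⟨z, s, t⟩ hp hpv ht
      have h1 := hL _ hp
      have h2 : (fun q : ℂ × ℝ × ℝ => ((q.2.1 : ℂ) + I * (q.1 * (starRingEnd ℂ) q.1)) + (q.2.2 : ℂ) * v q)
          =ᶠ[𝓝 (z, s, t)] (fun q : ℂ × ℝ × ℝ =>
            ((q.2.1 : ℂ) + I * (q.1 * (starRingEnd ℂ) q.1)) + (q.2.2 : ℂ) * v' q) := by
        filter_upwards [hpv] with q hq
        rw [hq]
      simp only [Lgen, wirt3, pds3, pdt3] at h1 ⊢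
      rw [h2.fderiv_eq, hder _ _ _ _ (hv'.differentiable one_ne_zero _),
        hder _ _ _ _ (hv'.differentiable one_ne_zero _),
        hder _ _ _ _ (hv'.differentiable one_ne_zero _)] at h1
      have ht' : (t : ℂ) ≠ 0 := by exact_mod_cast ht
      apply mul_left_cancel₀ ht'
      simp at h1
      linear_combination h1 - (I * (starRingEnd ℂ) z / 2 - I * z / 2) * I_sq
    have hcd := hv'.continuous_fderiv one_ne_zero
    have hcf : Continuous (deriv expNegInvGlue) :=
      (expNegInvGlue.contDiff (n := 1)).continuous_deriv (le_refl _)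
    have hpd : ∀ x, Continuous fun p => fderiv ℝ v' p x := fun x => hcd.clm_apply continuous_const
    have hu : ContDiff ℝ 1 (fun p : ℂ × ℝ => v' (p.1, p.2, 0)) := hv'.comp (by fun_prop)
    have hud : ∀ (p : ℂ × ℝ) x, fderiv ℝ (fun p : ℂ × ℝ => v' (p.1, p.2, 0)) p x
        = fderiv ℝ v' (p.1, p.2, 0) (x.1, x.2, 0) := by
      intro p x
      have g1 : HasFDerivAt (fun p : ℂ × ℝ => ((p.1, p.2, 0) : ℂ × ℝ × ℝ))
          ((ContinuousLinearMap.fst ℝ ℂ ℝ).prod ((ContinuousLinearMap.snd ℝ ℂ ℝ).prod 0)) p :=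
        ((ContinuousLinearMap.fst ℝ ℂ ℝ).prod ((ContinuousLinearMap.snd ℝ ℂ ℝ).prod
          (0 : ℂ × ℝ →L[ℝ] ℝ))).hasFDerivAt
      have g2 := ((hv'.differentiable one_ne_zero (p.1, p.2, 0)).hasFDerivAt).comp p g1
      have e := congrArg (fun A : ℂ × ℝ →L[ℝ] ℂ => A x) g2.fderiv
      exact e
    refine lewy_no _ hu ?_
    obtain ⟨ε, hε, hball⟩ := Metric.eventually_nhds_iff.1 hE
    filter_upwards [Metric.ball_mem_nhds (0 : ℂ × ℝ) hε]
    rintro ⟨z, s⟩ hp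
    have hp1 : max ‖z‖ ‖s‖ < ε := by simpa [Prod.norm_def] using hp
    simp only [wirt, pds, hud]
    set E : ℝ → ℂ := fun t => wirt3 v' (z, s, t) - I * z * pds3 v' (z, s, t)
        - (deriv expNegInvGlue s : ℝ) - (t : ℂ) * (deriv expNegInvGlue s : ℝ) * pds3 v' (z, s, t) with hEd
    have hEc : Continuous E := by
      have : ∀ x, Continuous fun t : ℝ => fderiv ℝ v' (z, s, t) x := fun x =>
        (hpd x).comp (by fun_prop : Continuous fun t : ℝ => (z, s, t))
      have q1 := this (1, 0, 0)
      have q2 := this (I, 0, 0)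
      have q3 := this (0, 1, 0)
      simp only [hEd, wirt3, pds3]
      fun_prop
    have hE0 : E 0 = 0 := by
      have t1 : Tendsto E (𝓝[≠] 0) (𝓝 (E 0)) := hEc.continuousAt.mono_left nhdsWithin_le_nhds
      refine tendsto_nhds_unique t1 (tendsto_const_nhds.congr' ?_)
      filter_upwards [self_mem_nhdsWithin, nhdsWithin_le_nhds (Metric.ball_mem_nhds (0 : ℝ) hε)] with t ht ht2
      refine (hball (y := (z, s, t)) ?_ ht).symm
      rw [dist_zero_right, Prod.norm_def, Prod.norm_def]
      have : ‖t‖ < ε := by simpa using ht2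
      exact max_lt ((le_max_left _ _).trans_lt hp1) (max_lt ((le_max_right _ _).trans_lt hp1) this)
    simp only [hEd, wirt3, pds3] at hE0
    simp at hE0 ⊢
    linear_combination hE0
end
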